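/- arXiv:1905.00605 — 3 statements merged into one kernel-verified Lean document; each statement's English description precedes it below -/
import Mathlib

section
/- Let X be a real Banach space that is uniformly convex and uniformly smooth, let 1 < p < ∞, and let M be a closed linear subspace of X. If (x_n) is a sequence in X that is Bregman monotone with respect to M and satisfies D_p(M, x_n) → 0 as n → ∞, then (x_n) converges in norm to a point of M. -/
open Filter Topology

noncomputable section

/-- The modulus of convexity of a normed space `X`. -/
def modConvex (X : Type*) [NormedAddCommGroup X] (ε : ℝ) : ℝ :=
  sInf {d : ℝ | ∃ x y : X, ‖x‖ = 1 ∧ ‖y‖ = 1 ∧ ε ≤ ‖x - y‖ ∧ d = 1 - ‖x + y‖ / 2}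

/-- The modulus of smoothness of a normed space `X`. -/
def modSmooth (X : Type*) [NormedAddCommGroup X] [NormedSpace ℝ X] (τ : ℝ) : ℝ :=
  sSup {d : ℝ | ∃ x y : X, ‖x‖ = 1 ∧ ‖y‖ = 1 ∧ d = (‖x + τ • y‖ + ‖x - τ • y‖) / 2 - 1}

/-- `X` is uniformly convex: the modulus of convexity is positive for positive ε. -/
def UnifConvex (X : Type*) [NormedAddCommGroup X] : Prop :=
  ∀ ε : ℝ, 0 < ε → ε ≤ 2 → 0 < modConvex X ε

/-- `X` is uniformly smooth: `ρ_X(τ)/τ → 0` as `τ → 0⁺`. -/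
def UnifSmooth (X : Type*) [NormedAddCommGroup X] [NormedSpace ℝ X] : Prop :=
  Tendsto (fun τ => modSmooth X τ / τ) (𝓝[>] (0 : ℝ)) (𝓝 0)

/-- `X` is uniformly convex of power type `ρ`. -/
def PowerConvex (X : Type*) [NormedAddCommGroup X] (ρ : ℝ) : Prop :=
  ∃ c > (0 : ℝ), ∀ ε ∈ Set.Icc (0 : ℝ) 2, c * ε ^ ρ ≤ modConvex X ε

/-- `X` is uniformly smooth of power type `σ` (with `σ > 1`). -/
def PowerSmooth (X : Type*) [NormedAddCommGroup X] [NormedSpace ℝ X] (σ : ℝ) : Prop :=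
  1 < σ ∧ ∃ C > (0 : ℝ), ∀ τ ∈ Set.Icc (0 : ℝ) 1, modSmooth X τ ≤ C * τ ^ σ

variable {X : Type*} [NormedAddCommGroup X] [NormedSpace ℝ X]

/-- The duality mapping `j_p`, the Fréchet derivative of `x ↦ (1/p)‖x‖^p`. -/
def dualityMap (p : ℝ) (x : X) : X →L[ℝ] ℝ :=
  fderiv ℝ (fun y : X => 1 / p * ‖y‖ ^ p) x

/-- The Bregman distance `D_p(x, y)`. -/
def bregmanDist (p : ℝ) (x y : X) : ℝ :=
  1 / p * ‖x‖ ^ p - 1 / p * ‖y‖ ^ p - dualityMap p y (x - y)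

/-- The Bregman projection of `x` onto the set `S`: the minimizer of `m ↦ D_p(m, x)` over `S`. -/
def bregmanProj (p : ℝ) (S : Set X) (x : X) : X :=
  letI : Nonempty X := ⟨x⟩
  Classical.epsilon fun y => y ∈ S ∧ ∀ m ∈ S, bregmanDist p y x ≤ bregmanDist p m x

/-- The Bregman distance `D_p(S, x)` from the point `x` to the set `S`. -/
def bregmanDistSet (p : ℝ) (S : Set X) (x : X) : ℝ :=
  bregmanDist p (bregmanProj p S x) x

/-- The metric projection of `x` onto the set `S`: the point of `S` nearest to `x`. -/
def metricProj (S : Set X) (x : X) : X :=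
  letI : Nonempty X := ⟨x⟩
  Classical.epsilon fun y => y ∈ S ∧ ∀ m ∈ S, ‖x - y‖ ≤ ‖x - m‖

/-- The sequence `x` is Bregman monotone with respect to the set `C`. -/
def BregmanMonotone (p : ℝ) {X : Type*} [NormedAddCommGroup X] [NormedSpace ℝ X]
    (C : Set X) (x : ℕ → X) : Prop :=
  ∀ z ∈ C, ∀ k l : ℕ, l ≤ k → bregmanDist p z (x k) ≤ bregmanDist p z (x l)

/-- Uniform convexity in the sense of the modulus gives the Mathlib class. -/
theorem unifConvex_space {X : Type*} [NormedAddCommGroup X] (h : UnifConvex X) :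
    UniformConvexSpace X := by
  constructor
  intro ε hε
  by_cases h2 : ε ≤ 2
  · refine ⟨2 * modConvex X ε, by have := h ε hε h2; linarith, ?_⟩
    intro x hx y hy hxy
    have : modConvex X ε ≤ 1 - ‖x + y‖ / 2 := by
      apply csInf_le
      · refine ⟨0, ?_⟩
        rintro d ⟨a, b, ha, hb, -, rfl⟩
        have := norm_add_le a b
        linarith
      · exact ⟨x, y, hx, hy, hxy, rfl⟩
    linarith
  · refine ⟨1, one_pos, ?_⟩
    intro x hx y hy hxy
    have := norm_sub_le x y
    linarith

theorem norm_le_modSmooth {X : Type*} [NormedAddCommGroup X] [NormedSpace ℝ X]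
    (x h : X) (hx : ‖x‖ = 1) (hh : h ≠ 0) :
    ‖x + h‖ + ‖x - h‖ - 2 ≤ 2 * modSmooth X ‖h‖ := by
  have hn : ‖h‖ ≠ 0 := norm_ne_zero_iff.2 hh
  have : (‖x + h‖ + ‖x - h‖) / 2 - 1 ≤ modSmooth X ‖h‖ := by
    apply le_csSup
    · refine ⟨‖h‖, ?_⟩
      rintro d ⟨a, b, ha, hb, rfl⟩
      have h1 := norm_add_le a (‖h‖ • b)
      have h2 := norm_sub_le a (‖h‖ • b)
      rw [norm_smul, norm_norm] at h1 h2
      rw [ha, hb] at h1 h2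
      linarith
    · refine ⟨x, ‖h‖⁻¹ • h, hx, ?_, ?_⟩
      · rw [norm_smul, norm_inv, norm_norm, inv_mul_cancel₀ hn]
      · rw [smul_smul, mul_inv_cancel₀ hn, one_smul]
  linarith

theorem norm_diff_unit {X : Type*} [NormedAddCommGroup X] [NormedSpace ℝ X]
    (hs : UnifSmooth X) (x : X) (hx : ‖x‖ = 1) : DifferentiableAt ℝ (fun y : X => ‖y‖) x := by
  obtain ⟨g, hg1, hgx⟩ := exists_dual_vector ℝ x (by rw [hx]; exact one_ne_zero)
  have hgx : g x = 1 := by rw [hgx, hx]; simp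
  have hle : ∀ v, g v ≤ ‖v‖ := fun v => by
    have := g.le_opNorm v
    rw [hg1, one_mul] at this
    exact (le_abs_self _).trans this
  suffices H : HasFDerivAt (fun y : X => ‖y‖) g x from H.differentiableAt
  rw [hasFDerivAt_iff_isLittleO_nhds_zero, Asymptotics.isLittleO_iff]
  intro c hc
  have hev : ∀ᶠ τ in 𝓝[>] (0 : ℝ), modSmooth X τ / τ < c / 2 :=
    hs.eventually (gt_mem_nhds (by positivity))
  rw [eventually_nhdsWithin_iff] at hev
  have hev2 : ∀ᶠ h : X in 𝓝 0, ‖h‖ ∈ Set.Ioi (0 : ℝ) → modSmooth X ‖h‖ / ‖h‖ < c / 2 := by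
    have : Tendsto (fun h : X => ‖h‖) (𝓝 0) (𝓝 0) := by
      simpa using (continuous_norm (E := X)).tendsto 0
    exact this.eventually hev
  filter_upwards [hev2] with h hh
  by_cases h0 : h = 0
  · subst h0; simp
  have hpos : 0 < ‖h‖ := norm_pos_iff.2 h0
  have h1 := hh hpos
  rw [div_lt_iff₀ hpos] at h1
  have h2 := norm_le_modSmooth x h hx h0
  have h3 := hle (x + h)
  have h4 := hle (x - h)
  rw [map_add, hgx] at h3
  rw [map_sub, hgx] at h4
  rw [Real.norm_eq_abs, abs_le, hx]
  constructor <;> nlinarith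

theorem norm_diff {X : Type*} [NormedAddCommGroup X] [NormedSpace ℝ X]
    (hs : UnifSmooth X) (x : X) (hx : x ≠ 0) : DifferentiableAt ℝ (fun y : X => ‖y‖) x := by
  have hn : ‖x‖ ≠ 0 := norm_ne_zero_iff.2 hx
  apply (differentiableAt_norm_smul (inv_ne_zero hn)).2
  apply norm_diff_unit hs
  rw [norm_smul, norm_inv, norm_norm, inv_mul_cancel₀ hn]

theorem hasFDerivAt_pow_zero {X : Type*} [NormedAddCommGroup X] [NormedSpace ℝ X]
    (p : ℝ) (hp : 1 < p) : HasFDerivAt (fun y : X => 1 / p * ‖y‖ ^ p) (0 : X →L[ℝ] ℝ) 0 := by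
  rw [hasFDerivAt_iff_isLittleO_nhds_zero, Asymptotics.isLittleO_iff]
  intro c hc
  have h1 : Tendsto (fun h : X => ‖h‖ ^ (p - 1)) (𝓝 0) (𝓝 0) := by
    have : ContinuousAt (fun h : X => ‖h‖ ^ (p - 1)) 0 :=
      continuous_norm.continuousAt.rpow_const (Or.inr (by linarith))
    have h2 := this.tendsto
    simpa [Real.zero_rpow (by linarith : p - 1 ≠ 0)] using h2
  filter_upwards [h1.eventually (gt_mem_nhds hc)] with h hh
  have hp0 : p ≠ 0 := by linarith
  by_cases h0 : h = 0
  · subst h0; simp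
  have hpos : 0 < ‖h‖ := norm_pos_iff.2 h0
  have e : ‖h‖ ^ p = ‖h‖ ^ (p - 1) * ‖h‖ := by
    rw [Real.rpow_sub_one hpos.ne']; field_simp
  have hnn : 0 ≤ ‖h‖ ^ (p - 1) := by positivity
  have hp1 : 1 / p ≤ 1 := by rw [div_le_one (by linarith)]; exact hp.le
  simp only [zero_add, norm_zero, Real.zero_rpow hp0, mul_zero, sub_zero,
    _root_.zero_apply]
  rw [Real.norm_of_nonneg (by positivity), e]
  calc 1 / p * (‖h‖ ^ (p - 1) * ‖h‖) ≤ 1 * (‖h‖ ^ (p - 1) * ‖h‖) := by gcongr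
    _ ≤ c * ‖h‖ := by rw [one_mul]; gcongr

theorem pow_diff {X : Type*} [NormedAddCommGroup X] [NormedSpace ℝ X]
    (hs : UnifSmooth X) (p : ℝ) (hp : 1 < p) (x : X) :
    DifferentiableAt ℝ (fun y : X => 1 / p * ‖y‖ ^ p) x := by
  by_cases hx : x = 0
  · subst hx; exact (hasFDerivAt_pow_zero p hp).differentiableAt
  · exact (((norm_diff hs x hx).hasFDerivAt.rpow_const (Or.inr hp.le)).const_mul _).differentiableAt

theorem dualityMap_self {X : Type*} [NormedAddCommGroup X] [NormedSpace ℝ X]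
    (hs : UnifSmooth X) (p : ℝ) (hp : 1 < p) (x : X) :
    dualityMap p x x = ‖x‖ ^ p := by
  have hp0 : p ≠ 0 := by linarith
  by_cases hx : x = 0
  · subst hx; simp [Real.zero_rpow hp0]
  · have hd := norm_diff hs x hx
    have H := ((hd.hasFDerivAt.rpow_const (p := p) (Or.inr hp.le)).const_mul (1 / p)).fderiv
    have hn : ‖x‖ ≠ 0 := norm_ne_zero_iff.2 hx
    unfold dualityMap
    rw [H]
    simp only [ContinuousLinearMap.smul_apply, smul_eq_mul]
    rw [hd.fderiv_norm_self, Real.rpow_sub_one hn]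
    field_simp

theorem pow_convex {X : Type*} [NormedAddCommGroup X] [NormedSpace ℝ X]
    (p : ℝ) (hp : 1 < p) : ConvexOn ℝ Set.univ (fun y : X => 1 / p * ‖y‖ ^ p) := by
  have hp0 : 0 < p := by linarith
  refine ⟨convex_univ, ?_⟩
  intro x _ y _ a b ha hb hab
  have h1 : ‖a • x + b • y‖ ≤ a * ‖x‖ + b * ‖y‖ := by
    refine (norm_add_le _ _).trans ?_
    rw [norm_smul, norm_smul, Real.norm_of_nonneg ha, Real.norm_of_nonneg hb]
  have h2 := (convexOn_rpow hp.le).2 (Set.mem_Ici.2 (norm_nonneg x))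
    (Set.mem_Ici.2 (norm_nonneg y)) ha hb hab
  simp only [smul_eq_mul] at h2 ⊢
  have h3 : ‖a • x + b • y‖ ^ p ≤ (a * ‖x‖ + b * ‖y‖) ^ p :=
    Real.rpow_le_rpow (norm_nonneg _) h1 hp0.le
  have h4 : 1 / p * ‖a • x + b • y‖ ^ p ≤ 1 / p * (a * ‖x‖ ^ p + b * ‖y‖ ^ p) :=
    mul_le_mul_of_nonneg_left (h3.trans h2) (by positivity)
  linarith

theorem breg_nonneg {X : Type*} [NormedAddCommGroup X] [NormedSpace ℝ X]
    (hs : UnifSmooth X) (p : ℝ) (hp : 1 < p) (z y : X) : 0 ≤ bregmanDist p z y := by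
  have hc : ConvexOn ℝ Set.univ (fun t : ℝ => 1 / p * ‖AffineMap.lineMap (k := ℝ) y z t‖ ^ p) := by
    have := (pow_convex (X := X) p hp).comp_affineMap (AffineMap.lineMap (k := ℝ) y z)
    simpa [Function.comp_def] using this
  have hd : HasDerivAt (fun t : ℝ => 1 / p * ‖AffineMap.lineMap (k := ℝ) y z t‖ ^ p)
      (dualityMap p y (z - y)) 0 := by
    have h1 := (pow_diff hs p hp (AffineMap.lineMap (k := ℝ) y z 0)).hasFDerivAt
    have h2 := h1.comp_hasDerivAt 0 (AffineMap.hasDerivAt_lineMap (a := y) (b := z))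
    simpa [Function.comp_def, dualityMap] using h2
  have := hc.le_slope_of_hasDerivAt (Set.mem_univ 0) (Set.mem_univ 1) one_pos hd
  simp [slope_def_field] at this
  unfold bregmanDist
  simp
  linarith

theorem breg_convex {X : Type*} [NormedAddCommGroup X] [NormedSpace ℝ X]
    (p : ℝ) (hp : 1 < p) (z y : X) (t : ℝ) (h0 : 0 ≤ t) (h1 : t ≤ 1) :
    bregmanDist p (y + t • (z - y)) y ≤ t * bregmanDist p z y := by
  have := (pow_convex (X := X) p hp).2 (Set.mem_univ y) (Set.mem_univ z)
    (sub_nonneg.2 h1) h0 (by ring)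
  have e : (1 - t) • y + t • z = y + t • (z - y) := by module
  rw [e] at this
  simp only [smul_eq_mul] at this
  unfold bregmanDist
  rw [add_sub_cancel_left, map_smul, smul_eq_mul]
  linarith

theorem scalar_uc (p : ℝ) (hp : 1 < p) (R η : ℝ) (hη : 0 < η) :
    ∃ δ > 0, ∀ a b : ℝ, 0 ≤ a → a ≤ R → 0 ≤ b → b ≤ R → η ≤ |a - b| →
      ((a + b) / 2) ^ p ≤ (a ^ p + b ^ p) / 2 - δ := by
  have hp0 : 0 ≤ p := by linarith
  let K : Set (ℝ × ℝ) := (Set.Icc 0 R ×ˢ Set.Icc 0 R) ∩ {q | η ≤ |q.1 - q.2|}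
  have hK : IsCompact K :=
    (isCompact_Icc.prod isCompact_Icc).inter_right (isClosed_le (by fun_prop) (by fun_prop))
  let G : ℝ × ℝ → ℝ := fun q => (q.1 ^ p + q.2 ^ p) / 2 - ((q.1 + q.2) / 2) ^ p
  have hG : Continuous G := by
    refine Continuous.sub (((continuous_fst.rpow_const fun _ => Or.inr hp0).add
      (continuous_snd.rpow_const fun _ => Or.inr hp0)).div_const 2) ?_
    exact Continuous.rpow_const (by fun_prop) fun _ => Or.inr hp0
  have hpos : ∀ q ∈ K, 0 < G q := by
    rintro ⟨a, b⟩ ⟨⟨ha, hb⟩, hab⟩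
    simp only [Set.mem_Icc, Set.mem_ofPred_eq] at ha hb hab
    have hne : a ≠ b := by
      rintro rfl
      simp at hab
      linarith
    have := (strictConvexOn_rpow hp).2 (Set.mem_Ici.2 ha.1) (Set.mem_Ici.2 hb.1) hne
      (by norm_num : (0 : ℝ) < 1 / 2) (by norm_num : (0 : ℝ) < 1 / 2) (by norm_num)
    simp only [smul_eq_mul] at this
    rw [show 1 / 2 * a + 1 / 2 * b = (a + b) / 2 by ring] at this
    show 0 < (a ^ p + b ^ p) / 2 - ((a + b) / 2) ^ p
    linarith
  rcases K.eq_empty_or_nonempty with he | hne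
  · refine ⟨1, one_pos, ?_⟩
    intro a b h1 h2 h3 h4 h5
    have : (a, b) ∈ K := ⟨⟨⟨h1, h2⟩, ⟨h3, h4⟩⟩, h5⟩
    rw [he] at this
    exact this.elim
  · obtain ⟨q, hq, hmin⟩ := hK.exists_isMinOn hne hG.continuousOn
    refine ⟨G q, hpos q hq, ?_⟩
    intro a b h1 h2 h3 h4 h5
    have hm : (a, b) ∈ K := ⟨⟨⟨h1, h2⟩, ⟨h3, h4⟩⟩, h5⟩
    have : G q ≤ (a ^ p + b ^ p) / 2 - ((a + b) / 2) ^ p := hmin hm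
    linarith

theorem norm_uc {X : Type*} [NormedAddCommGroup X] [NormedSpace ℝ X]
    (hc : UnifConvex X) (R ε : ℝ) (hR : 0 < R) (hε : 0 < ε) :
    ∃ δ > 0, ∀ x y : X, ‖y‖ ≤ ‖x‖ → ‖x‖ ≤ R → ε ≤ ‖x - y‖ → ‖x + y‖ ≤ 2 * ‖x‖ - δ := by
  haveI := unifConvex_space hc
  obtain ⟨δ, hδ, H⟩ := exists_forall_closed_ball_dist_add_le_two_sub X (div_pos hε hR)
  refine ⟨ε / 2 * δ, by positivity, ?_⟩
  intro x y hyx hx hxy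
  have h1 := norm_sub_le x y
  have hx2 : ε / 2 ≤ ‖x‖ := by linarith
  have hxp : 0 < ‖x‖ := by linarith
  have n1 : ∀ v : X, ‖‖x‖⁻¹ • v‖ = ‖v‖ / ‖x‖ := fun v => by
    rw [norm_smul, norm_inv, norm_norm]; field_simp
  have := @H (‖x‖⁻¹ • x) (by rw [n1, div_self hxp.ne']) (‖x‖⁻¹ • y)
    (by rw [n1, div_le_one hxp]; exact hyx)
    (by rw [← smul_sub, n1]
        exact div_le_div₀ (norm_nonneg _) hxy hxp hx)
  rw [← smul_add, n1, div_le_iff₀ hxp] at this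
  nlinarith

theorem pow_uc {X : Type*} [NormedAddCommGroup X] [NormedSpace ℝ X]
    (hc : UnifConvex X) (p : ℝ) (hp : 1 < p) (R ε : ℝ) (hR : 0 < R) (hε : 0 < ε) :
    ∃ δ > 0, ∀ x y : X, ‖x‖ ≤ R → ‖y‖ ≤ R → ε ≤ ‖x - y‖ →
      ‖(1 / 2 : ℝ) • (x + y)‖ ^ p ≤ (‖x‖ ^ p + ‖y‖ ^ p) / 2 - δ := by
  have hp0 : 0 ≤ p := by linarith
  obtain ⟨c, hcpos, hN⟩ := norm_uc hc R ε hR hε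
  obtain ⟨d, hd, hS⟩ := scalar_uc p hp R (c / 2) (by positivity)
  have key : ∀ x y : X, ‖y‖ ≤ ‖x‖ → ‖x‖ ≤ R → ε ≤ ‖x - y‖ →
      ‖(1 / 2 : ℝ) • (x + y)‖ ^ p ≤ (‖x‖ ^ p + ‖y‖ ^ p) / 2 - min d ((c / 4) ^ p) := by
    intro x y hyx hx hxy
    have e : ‖(1 / 2 : ℝ) • (x + y)‖ = ‖x + y‖ / 2 := by
      rw [norm_smul]; norm_num; ring
    rw [e]
    have hx0 := norm_nonneg x
    have hy0 := norm_nonneg y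
    by_cases hab : c / 2 ≤ |‖x‖ - ‖y‖|
    · have h1 := hS ‖x‖ ‖y‖ hx0 hx hy0 (hyx.trans hx) hab
      have h2 : (‖x + y‖ / 2) ^ p ≤ ((‖x‖ + ‖y‖) / 2) ^ p :=
        Real.rpow_le_rpow (by positivity) (by linarith [norm_add_le x y]) hp0
      have := min_le_left d ((c / 4) ^ p)
      linarith
    · rw [not_le, abs_lt] at hab
      have h1 := hN x y hyx hx hxy
      have h2 : ‖x + y‖ / 2 + c / 4 ≤ (‖x‖ + ‖y‖) / 2 := by linarith
      have h3 := Real.add_rpow_le_rpow_add (p := p) (a := ‖x + y‖ / 2) (b := c / 4)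
        (by positivity) (by positivity) hp.le
      have h4 := Real.rpow_le_rpow (by positivity) h2 hp0
      have h5 := (convexOn_rpow hp.le).2 (Set.mem_Ici.2 hx0) (Set.mem_Ici.2 hy0)
        (by norm_num : (0 : ℝ) ≤ 1 / 2) (by norm_num : (0 : ℝ) ≤ 1 / 2) (by norm_num)
      simp only [smul_eq_mul] at h5
      rw [show 1 / 2 * ‖x‖ + 1 / 2 * ‖y‖ = (‖x‖ + ‖y‖) / 2 by ring] at h5
      have := min_le_right d ((c / 4) ^ p)
      linarith
  refine ⟨min d ((c / 4) ^ p), lt_min hd (by positivity), ?_⟩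
  intro x y hx hy hxy
  rcases le_total ‖y‖ ‖x‖ with h | h
  · exact key x y h hx hxy
  · have := key y x h hy (by rwa [norm_sub_rev])
    rw [add_comm y x] at this
    linarith

theorem breg_uc {X : Type*} [NormedAddCommGroup X] [NormedSpace ℝ X]
    (hc : UnifConvex X) (p : ℝ) (hp : 1 < p) (R ε : ℝ) (hR : 0 < R) (hε : 0 < ε) :
    ∃ δ > 0, ∀ x y w : X, ‖x‖ ≤ R → ‖y‖ ≤ R → ε ≤ ‖x - y‖ →
      bregmanDist p ((1 / 2 : ℝ) • (x + y)) w
        ≤ (bregmanDist p x w + bregmanDist p y w) / 2 - δ := by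
  obtain ⟨δ, hδ, H⟩ := pow_uc hc p hp R ε hR hε
  have hp0 : 0 < p := by linarith
  refine ⟨1 / p * δ, by positivity, ?_⟩
  intro x y w hx hy hxy
  have h1 := mul_le_mul_of_nonneg_left (H x y hx hy hxy) (by positivity : 0 ≤ 1 / p)
  unfold bregmanDist
  simp only [map_sub, map_smul, map_add, smul_eq_mul]
  linarith

theorem breg_key {X : Type*} [NormedAddCommGroup X] [NormedSpace ℝ X]
    (hc : UnifConvex X) (hs : UnifSmooth X)
    (p : ℝ) (hp : 1 < p) (R ε : ℝ) (hR : 0 < R) (hε : 0 < ε) :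
    ∃ δ > 0, ∀ z y : X, ‖y‖ ≤ R → ε ≤ ‖z - y‖ → ‖z - y‖ * δ ≤ bregmanDist p z y := by
  obtain ⟨δ, hδ, H⟩ := breg_uc hc p hp (R + ε) ε (by positivity) hε
  refine ⟨2 * δ / ε, by positivity, ?_⟩
  intro z y hy hzy
  have ht : 0 < ‖z - y‖ := by linarith
  set t := ε / ‖z - y‖ with htdef
  have ht0 : 0 ≤ t := by positivity
  have ht1 : t ≤ 1 := by rw [htdef, div_le_one ht]; exact hzy
  have h1 := breg_convex p hp z y t ht0 ht1
  have hn : ‖t • (z - y)‖ = ε := by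
    rw [norm_smul, Real.norm_of_nonneg ht0, htdef]; field_simp
  have h2 := H (y + t • (z - y)) y y
    ((norm_add_le _ _).trans (by rw [hn]; linarith)) (by linarith)
    (by rw [add_sub_cancel_left, hn])
  have h3 := breg_nonneg hs p hp ((1 / 2 : ℝ) • (y + t • (z - y) + y)) y
  have h4 : bregmanDist p y y = 0 := by simp [bregmanDist]
  have h5 : 2 * δ ≤ t * bregmanDist p z y := by linarith
  rw [htdef, div_mul_eq_mul_div, le_div_iff₀ ht] at h5
  rw [← mul_div_assoc, div_le_iff₀ hε]
  linarith

theorem proj_exists {X : Type*} [NormedAddCommGroup X] [NormedSpace ℝ X] [CompleteSpace X]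
    (hc : UnifConvex X) (hs : UnifSmooth X)
    (p : ℝ) (hp : 1 < p) (M : Submodule ℝ X) (hM : IsClosed (M : Set X)) (y : X) :
    ∃ m ∈ (M : Set X), ∀ m' ∈ (M : Set X), bregmanDist p m y ≤ bregmanDist p m' y := by
  set S : Set ℝ := (fun m => bregmanDist p m y) '' (M : Set X) with hS
  have hSne : S.Nonempty := ⟨_, 0, M.zero_mem, rfl⟩
  have hSb : BddBelow S := ⟨0, by rintro _ ⟨m, -, rfl⟩; exact breg_nonneg hs p hp m y⟩
  set I := sInf S with hI
  have hlow : ∀ m ∈ (M : Set X), I ≤ bregmanDist p m y := fun m hm => csInf_le hSb ⟨m, hm, rfl⟩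
  have hex : ∀ n : ℕ, ∃ m ∈ (M : Set X), bregmanDist p m y < I + 1 / ((n : ℝ) + 1) := by
    intro n
    have hn : I < I + 1 / ((n : ℝ) + 1) := by
      have : 0 < 1 / ((n : ℝ) + 1) := by positivity
      linarith
    obtain ⟨_, ⟨m, hm, rfl⟩, hlt⟩ := exists_lt_of_csInf_lt hSne hn
    exact ⟨m, hm, hlt⟩
  choose u huM hu using hex
  have h1n : Tendsto (fun n : ℕ => 1 / ((n : ℝ) + 1)) atTop (𝓝 0) :=
    tendsto_one_div_add_atTop_nhds_zero_nat
  have hI0 : 0 ≤ I := le_csInf hSne (by rintro _ ⟨m, -, rfl⟩; exact breg_nonneg hs p hp m y)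
  -- boundedness
  obtain ⟨R, hR, hbd⟩ : ∃ R > 0, ∀ n, ‖u n‖ ≤ R := by
    obtain ⟨δ, hδ, H⟩ := breg_key hc hs p hp (‖y‖ + 1) 1 (by positivity) one_pos
    refine ⟨‖y‖ + 1 + (I + 1) / δ, by positivity, fun n => ?_⟩
    have hle : ‖u n - y‖ ≤ 1 + (I + 1) / δ := by
      by_cases h : 1 ≤ ‖u n - y‖
      · have h2 := H (u n) y (by linarith) h
        have h3 := hu n
        have h4 : 1 / ((n : ℝ) + 1) ≤ 1 := by
          rw [div_le_one (by positivity)]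
          linarith [(Nat.cast_nonneg n : (0 : ℝ) ≤ n)]
        have : ‖u n - y‖ ≤ (I + 1) / δ := by
          rw [le_div_iff₀ hδ]; linarith
        linarith
      · have : 0 ≤ (I + 1) / δ := by positivity
        linarith
    have := norm_le_insert' (u n) y
    linarith
  have hcau : CauchySeq u := by
    rw [Metric.cauchySeq_iff]
    intro ε hε
    obtain ⟨δ, hδ, H⟩ := breg_uc hc p hp R ε hR hε
    obtain ⟨N, hN⟩ := (h1n.eventually (gt_mem_nhds hδ)).exists_forall_of_atTop
    refine ⟨N, fun m hm n hn => ?_⟩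
    by_contra hcon
    rw [not_lt, dist_eq_norm] at hcon
    have h2 := H (u m) (u n) y (hbd m) (hbd n) hcon
    have h3 := hlow _ (M.smul_mem (1 / 2 : ℝ) (M.add_mem (huM m) (huM n)))
    have := hN m hm
    have := hN n hn
    have := hu m
    have := hu n
    linarith
  obtain ⟨m, hm⟩ := cauchySeq_tendsto_of_complete hcau
  refine ⟨m, hM.mem_of_tendsto hm (Eventually.of_forall huM), fun m' hm' => ?_⟩
  have hcont : Continuous (fun z => bregmanDist p z y) := by
    unfold bregmanDist
    have : Continuous (fun z : X => ‖z‖ ^ p) :=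
      continuous_norm.rpow_const fun _ => Or.inr (by linarith)
    fun_prop
  have hlim := (hcont.tendsto m).comp hm
  have hlim2 : Tendsto (fun n : ℕ => I + 1 / ((n : ℝ) + 1)) atTop (𝓝 (I + 0)) :=
    tendsto_const_nhds.add h1n
  rw [add_zero] at hlim2
  exact (le_of_tendsto_of_tendsto' hlim hlim2 fun n => (hu n).le).trans (hlow m' hm')

theorem statement11 {X : Type*} [NormedAddCommGroup X] [NormedSpace ℝ X] [CompleteSpace X]
    (hconv : UnifConvex X) (hsmooth : UnifSmooth X) (p : ℝ) (hp : 1 < p)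
    (M : Submodule ℝ X) (hM : IsClosed (M : Set X)) (x : ℕ → X)
    (hmono : BregmanMonotone p (M : Set X) x)
    (h : Filter.Tendsto (fun n => bregmanDistSet p (M : Set X) (x n)) Filter.atTop (𝓝 0)) :
    ∃ y ∈ (M : Set X), Filter.Tendsto x Filter.atTop (𝓝 y) := by
  have hproj : ∀ n, bregmanProj p (M : Set X) (x n) ∈ (M : Set X) := fun n => by
    obtain ⟨m, hm, hmin⟩ := proj_exists hconv hsmooth p hp M hM (x n)
    letI : Nonempty X := ⟨x n⟩
    exact (Classical.epsilon_spec (p := fun y => y ∈ (M : Set X) ∧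
      ∀ m ∈ (M : Set X), bregmanDist p y (x n) ≤ bregmanDist p m (x n)) ⟨m, hm, hmin⟩).1
  set z : ℕ → X := fun n => bregmanProj p (M : Set X) (x n) with hz
  have hp0 : 0 < p := by linarith
  -- boundedness
  obtain ⟨R, hR, hbd⟩ : ∃ R > 0, ∀ n, ‖x n‖ ≤ R := by
    refine ⟨‖x 0‖ + 1, by positivity, fun n => ?_⟩
    have h1 := hmono 0 M.zero_mem n 0 (Nat.zero_le n)
    have e : ∀ y : X, bregmanDist p 0 y = (1 - 1 / p) * ‖y‖ ^ p := fun y => by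
      unfold bregmanDist
      rw [zero_sub, map_neg, dualityMap_self hsmooth p hp, norm_zero, Real.zero_rpow hp0.ne']
      ring
    rw [e, e] at h1
    have hq : 0 < 1 - 1 / p := by
      have : 1 / p < 1 := by rw [div_lt_one hp0]; exact hp
      linarith
    have h2 := le_of_mul_le_mul_left h1 hq
    rw [Real.rpow_le_rpow_iff (norm_nonneg _) (norm_nonneg _) hp0] at h2
    linarith
  have hsmall : ∀ ε > 0, ∃ N, ∀ n ≥ N, ∀ k ≥ n, ‖z n - x k‖ < ε := by
    intro ε hε
    obtain ⟨δ, hδ, H⟩ := breg_key hconv hsmooth p hp R ε hR hε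
    obtain ⟨N, hN⟩ := (h.eventually (gt_mem_nhds (mul_pos hε hδ))).exists_forall_of_atTop
    refine ⟨N, fun n hn k hk => ?_⟩
    by_contra hcon
    rw [not_lt] at hcon
    have h1 := H (z n) (x k) (hbd k) hcon
    have h2 := hmono (z n) (hproj n) k n hk
    have h3 : bregmanDist p (z n) (x n) < ε * δ := hN n hn
    have h4 := mul_le_mul_of_nonneg_right hcon hδ.le
    linarith
  have hcau : CauchySeq x := by
    rw [Metric.cauchySeq_iff']
    intro ε hε
    obtain ⟨N, hN⟩ := hsmall (ε / 2) (by positivity)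
    refine ⟨N, fun n hn => ?_⟩
    have h1 := hN N le_rfl n hn
    have h2 := hN N le_rfl N le_rfl
    rw [← dist_eq_norm] at h1 h2
    have := dist_triangle_left (x n) (x N) (z N)
    linarith
  obtain ⟨y, hy⟩ := cauchySeq_tendsto_of_complete hcau
  refine ⟨y, ?_, hy⟩
  have hd : Tendsto (fun n => z n - x n) atTop (𝓝 0) := by
    rw [Metric.tendsto_atTop]
    intro ε hε
    obtain ⟨N, hN⟩ := hsmall ε hε
    exact ⟨N, fun n hn => by rw [dist_zero_right]; exact hN n hn n le_rfl⟩
  have hzy : Tendsto z atTop (𝓝 y) := by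
    have := hd.add hy
    simpa using this
  exact hM.mem_of_tendsto hzy (Eventually.of_forall hproj)
end
end

section
/- Let X be a real Banach space that is uniformly convex and uniformly smooth, let 1 < p < ∞, and let M, N be closed linear subspaces of X such that the pair (M,N) is boundedly linear Bregman regular. Then for every x ∈ X, the sequence defined by x₀ = x, x_{2n+1} = Π^p_M x_{2n}, x_{2n} = Π^p_N x_{2n−1} converges in norm to Π^p_{M∩N} x. If, in addition, X is ρ-convex and σ-smooth with σ ≤ p ≤ ρ, then there exist constants C > 0 and q ∈ (0,1) with D_p(Π^p_{M∩N} x, x_n) ≤ C q^n for all n, and there exist C' > 0 and q' ∈ (0,1) with ‖Π^p_{M∩N} x − x_n‖ ≤ C' (q')^n for all n; that is, the convergence is linear. -/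
open Filter Topology

noncomputable section

variable {X : Type*} [NormedAddCommGroup X] [NormedSpace ℝ X]

/-- The pair `(M, N)` is Bregman regular. -/
def BregmanRegular (p : ℝ) {X : Type*} [NormedAddCommGroup X] [NormedSpace ℝ X]
    (M N : Submodule ℝ X) : Prop :=
  ∀ ε > (0 : ℝ), ∃ δ > (0 : ℝ), ∀ x : X,
    max (bregmanDistSet p (M : Set X) x) (bregmanDistSet p (N : Set X) x) < δ →
      bregmanDistSet p ((M ⊓ N : Submodule ℝ X) : Set X) x < ε

/-- The pair `(M, N)` is linear Bregman regular. -/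
def LinearBregmanRegular (p : ℝ) {X : Type*} [NormedAddCommGroup X] [NormedSpace ℝ X]
    (M N : Submodule ℝ X) : Prop :=
  ∃ κ > (0 : ℝ), ∀ x : X,
    bregmanDistSet p ((M ⊓ N : Submodule ℝ X) : Set X) x ≤
      κ * max (bregmanDistSet p (M : Set X) x) (bregmanDistSet p (N : Set X) x)

/-- The pair `(M, N)` is boundedly linear Bregman regular. -/
def BoundedlyLinearBregmanRegular (p : ℝ) {X : Type*} [NormedAddCommGroup X] [NormedSpace ℝ X]
    (M N : Submodule ℝ X) : Prop :=
  ∀ S : Set X, Bornology.IsBounded S → ∃ κ > (0 : ℝ), ∀ x ∈ S,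
    bregmanDistSet p ((M ⊓ N : Submodule ℝ X) : Set X) x ≤
      κ * max (bregmanDistSet p (M : Set X) x) (bregmanDistSet p (N : Set X) x)

/-- Tangent line inequality for `t ↦ t ^ p`. -/
theorem scal_tangent {p : ℝ} (hp : 1 < p) {u s : ℝ} (hu : 0 ≤ u) (hs : 0 ≤ s) :
    u ^ p + p * u ^ (p - 1) * (s - u) ≤ s ^ p := by
  rcases hu.eq_or_lt with h | h
  · subst h
    rw [Real.zero_rpow (by linarith), Real.zero_rpow (by linarith)]
    have := Real.rpow_nonneg hs p
    linarith
  · have h1 := one_add_mul_self_le_rpow_one_add (s := s / u - 1) (p := p)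
      (by have := div_nonneg hs h.le; linarith) hp.le
    have e : (1 + (s / u - 1)) = s / u := by ring
    rw [e, Real.div_rpow hs hu, le_div_iff₀ (Real.rpow_pos_of_pos h p)] at h1
    have e2 : u ^ p = u ^ (p - 1) * u := by
      rw [← Real.rpow_add_one h.ne']; congr 1; ring
    calc _ = (1 + p * (s / u - 1)) * u ^ p := by
            rw [e2]; field_simp
      _ ≤ _ := h1

theorem scal_pow_gap {a : ℝ} (ha : 0 < a) {θ : ℝ} (h0 : 0 ≤ θ) (h1 : θ ≤ 1) :
    (1 - θ) ^ a ≤ 1 - a / (1 + a) * θ := by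
  have h2 : (1 - θ) ^ a ≤ (Real.exp (-θ)) ^ a := by
    apply Real.rpow_le_rpow (by linarith) _ ha.le
    have := Real.add_one_le_exp (-θ); linarith
  rw [← Real.exp_mul] at h2
  have h3 : Real.exp (-θ * a) ≤ 1 / (1 + a * θ) := by
    rw [le_div_iff₀ (by positivity)]
    have h4 := Real.add_one_le_exp (a * θ)
    have h5 : Real.exp (-θ * a) * Real.exp (a * θ) = 1 := by
      rw [← Real.exp_add]; simp [mul_comm]
    rw [← h5]
    apply mul_le_mul_of_nonneg_left (by linarith) (Real.exp_pos _).le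
  refine h2.trans (h3.trans ?_)
  rw [div_le_iff₀ (by positivity), ← sub_nonneg]
  have : (1 - a / (1 + a) * θ) * (1 + a * θ) - 1 = a ^ 2 * θ * (1 - θ) / (1 + a) := by
    field_simp; ring
  rw [this]
  have : 0 ≤ 1 - θ := by linarith
  positivity

theorem scal_gap {p : ℝ} (hp : 1 < p) {R : ℝ} (hR : 0 < R) :
    ∃ c > (0 : ℝ), ∀ s t : ℝ, 0 ≤ t → t ≤ s → s ≤ R →
      2 * ((s + t) / 2) ^ p + c * (s - t) ^ (p + 1) ≤ s ^ p + t ^ p := by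
  refine ⟨(p - 1) / (16 * R) * (1 / 4) ^ (p - 1), ?_, ?_⟩
  · have : 0 < p - 1 := by linarith
    positivity
  intro s t ht hts hsR
  rcases hts.eq_or_lt with h | h
  · subst h
    rw [sub_self, Real.zero_rpow (by linarith)]
    have : (t + t) / 2 = t := by ring
    rw [this]; linarith
  obtain ⟨d, hd⟩ : ∃ d, d = s - t := ⟨_, rfl⟩
  have hd0 : 0 < d := by linarith
  set u := (s + t) / 2 with hu
  set w := u + d / 4 with hw
  have hs : 0 ≤ s := by linarith
  have hu0 : 0 < u := by rw [hu]; linarith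
  have hw0 : 0 < w := by linarith
  have hwR : w ≤ R := by rw [hw, hu, hd]; linarith
  have i1 := scal_tangent hp hw0.le hs
  have i2 := scal_tangent hp hu0.le hw0.le
  have i3 := scal_tangent hp hu0.le ht
  have e1 : s - w = d / 4 := by rw [hw, hu, hd]; ring
  have e2 : w - u = d / 4 := by rw [hw]; ring
  have e3 : t - u = - (d / 2) := by rw [hu, hd]; ring
  rw [e1] at i1; rw [e2] at i2; rw [e3] at i3
  have hdw : d / 4 ≤ w := by linarith
  have i4 := scal_pow_gap (a := p - 1) (by linarith) (θ := d / 4 / w) (by positivity)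
    (by rw [div_le_one hw0]; exact hdw)
  have e4 : 1 - d / 4 / w = u / w := by field_simp; linarith
  have e5 : 1 + (p - 1) = p := by ring
  rw [e4, e5, Real.div_rpow hu0.le hw0.le, div_le_iff₀ (Real.rpow_pos_of_pos hw0 _)] at i4
  have i5 : (d / 4) ^ (p - 1) ≤ w ^ (p - 1) :=
    Real.rpow_le_rpow (by positivity) hdw (by linarith)
  have e6 : (d / 4) ^ (p - 1) = d ^ (p - 1) * (1 / 4) ^ (p - 1) := by
    rw [← Real.mul_rpow hd0.le (by norm_num)]; congr 1; ring
  have e7 : d ^ (p + 1) = d ^ (p - 1) * d * d := by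
    rw [← Real.rpow_add_one hd0.ne', ← Real.rpow_add_one hd0.ne']; congr 1; ring
  have i6 : (p - 1) / p * (d / 4 / R) * (d / 4) ^ (p - 1) ≤
      (p - 1) / p * (d / 4 / w) * w ^ (p - 1) := by
    have : 0 < p - 1 := by linarith
    have := Real.rpow_nonneg hw0.le (p - 1)
    gcongr
  have i7 : (p - 1) / p * (d / 4 / R) * (d / 4) ^ (p - 1) ≤ w ^ (p - 1) - u ^ (p - 1) := by
    nlinarith
  have i8 := mul_le_mul_of_nonneg_left i7 (show 0 ≤ p * (d / 4) by positivity)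
  have e8 : p * (d / 4) * ((p - 1) / p * (d / 4 / R) * (d / 4) ^ (p - 1)) =
     (p - 1) / (16 * R) * (1 / 4) ^ (p - 1) * d ^ (p + 1) := by
    rw [e6, e7]; field_simp; ring
  have : 0 ≤ (p - 1) / (16 * R) * (1 / 4) ^ (p - 1) * d ^ (p + 1) := by
    have : 0 < p - 1 := by linarith
    positivity
  rw [← hd]
  nlinarith

theorem modConvex_le {X : Type*} [NormedAddCommGroup X] {ε : ℝ} {x y : X} (hx : ‖x‖ = 1)
    (hy : ‖y‖ = 1) (h : ε ≤ ‖x - y‖) : modConvex X ε ≤ 1 - ‖x + y‖ / 2 := by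
  apply csInf_le
  · refine ⟨0, ?_⟩
    rintro d ⟨x, y, hx, hy, -, rfl⟩
    have := norm_add_le x y
    linarith
  · exact ⟨x, y, hx, hy, h, rfl⟩

theorem modConvex_mono {X : Type*} [NormedAddCommGroup X] [NormedSpace ℝ X] [Nontrivial X]
    {ε ε' : ℝ} (h : ε ≤ ε') (h' : ε' ≤ 2) :
    modConvex X ε ≤ modConvex X ε' := by
  apply le_csInf
  · obtain ⟨x, hx⟩ := exists_norm_eq X (zero_le_one (α := ℝ))
    refine ⟨_, x, -x, hx, by simpa using hx, ?_, rfl⟩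
    rw [sub_neg_eq_add, ← two_smul ℝ x, norm_smul, hx]; simpa using h'
  · rintro d ⟨x, y, hx, hy, hd, rfl⟩
    exact modConvex_le hx hy (h.trans hd)

theorem modConvex_le_one {X : Type*} [NormedAddCommGroup X] [NormedSpace ℝ X] [Nontrivial X]
    {ε : ℝ} (h' : ε ≤ 2) : modConvex X ε ≤ 1 := by
  obtain ⟨x, hx⟩ := exists_norm_eq X (zero_le_one (α := ℝ))
  have := modConvex_le (ε := ε) (x := x) (y := -x) hx (by simpa using hx)
    (by rw [sub_neg_eq_add, ← two_smul ℝ x, norm_smul, hx]; simpa using h')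
  simpa using this

theorem nontrivial_of_unifConvex {X : Type*} [NormedAddCommGroup X]
    (hconv : UnifConvex X) : Nontrivial X := by
  by_contra h
  rw [not_nontrivial_iff_subsingleton] at h
  have h1 := hconv 1 one_pos (by norm_num)
  have : {d : ℝ | ∃ x y : X, ‖x‖ = 1 ∧ ‖y‖ = 1 ∧ 1 ≤ ‖x - y‖ ∧ d = 1 - ‖x + y‖ / 2} = ∅ := by
    ext d
    simp only [Set.mem_ofPred_eq, Set.mem_empty_iff_false, iff_false]
    rintro ⟨x, y, hx, -⟩
    rw [Subsingleton.elim x 0] at hx; simp at hx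
  unfold modConvex at h1
  rw [this] at h1
  simp at h1

/-- Quantitative midpoint convexity of `‖·‖ ^ p` on bounded sets. -/
theorem norm_gap_aux {X : Type*} [NormedAddCommGroup X] [NormedSpace ℝ X]
    (hconv : UnifConvex X) {p : ℝ} (hp : 1 < p) {R : ℝ} (hR : 0 < R) :
    ∃ K > (0 : ℝ), ∀ y z : X, ‖y‖ ≤ ‖z‖ → ‖z‖ ≤ R →
      2 * ‖(1 / 2 : ℝ) • (y + z)‖ ^ p + K * (‖z - y‖ ^ (p + 1) * modConvex X (‖z - y‖ / (2 * R)))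
        ≤ ‖z‖ ^ p + ‖y‖ ^ p := by
  have := nontrivial_of_unifConvex hconv
  obtain ⟨c, hc, hgap⟩ := scal_gap hp hR
  have h40 : (0 : ℝ) < (1 / 4) ^ p := by positivity
  have h20 : (0 : ℝ) < (1 / 2) ^ (p + 1) := by positivity
  refine ⟨min (c * (1 / 2) ^ (p + 1)) ((1 / 4) ^ p / R), lt_min (by positivity) (by positivity),
    ?_⟩
  intro y z hyz hz
  set K := min (c * (1 / 2) ^ (p + 1)) ((1 / 4) ^ p / R) with hK
  have hK0 : 0 < K := lt_min (by positivity) (by positivity)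
  have hmid : ‖(1 / 2 : ℝ) • (y + z)‖ = ‖y + z‖ / 2 := by
    rw [norm_smul]; norm_num; ring
  rw [hmid]
  obtain ⟨ε, hε⟩ : ∃ ε, ε = ‖z - y‖ := ⟨_, rfl⟩
  rw [← hε]
  have hsc : 2 * ((‖z‖ + ‖y‖) / 2) ^ p ≤ ‖z‖ ^ p + ‖y‖ ^ p := by
    have := hgap ‖z‖ ‖y‖ (norm_nonneg _) hyz hz
    have h2 : 0 ≤ (‖z‖ - ‖y‖) ^ (p + 1) := Real.rpow_nonneg (by linarith) _
    nlinarith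
  have htri : ‖y + z‖ / 2 ≤ (‖z‖ + ‖y‖) / 2 := by
    have := norm_add_le y z; linarith
  have htrip : (‖y + z‖ / 2) ^ p ≤ ((‖z‖ + ‖y‖) / 2) ^ p :=
    Real.rpow_le_rpow (by positivity) htri (by linarith)
  have hε0 : 0 ≤ ε := hε ▸ norm_nonneg _
  rcases hε0.eq_or_lt with h | hpos
  · rw [← h, Real.zero_rpow (by linarith)]; linarith
  have hεR : ε ≤ 2 * R := by
    have := norm_sub_le z y; linarith
  have hr1 : ε / (2 * R) ≤ 1 := by rw [div_le_one (by positivity)]; exact hεR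
  have hr2 : ε / (2 * R) ≤ 2 := by linarith
  have hδ0 : 0 < modConvex X (ε / (2 * R)) := hconv _ (by positivity) hr2
  have hδ1 : modConvex X (ε / (2 * R)) ≤ 1 := modConvex_le_one hr2
  have hεp : 0 < ε ^ (p + 1) := by positivity
  obtain ⟨δ, hδ⟩ : ∃ δ, δ = modConvex X (ε / (2 * R)) := ⟨_, rfl⟩
  rw [← hδ] at hδ0 hδ1 ⊢
  rcases le_or_gt (ε / 2) (‖z‖ - ‖y‖) with hA | hB
  · have h1 := hgap ‖z‖ ‖y‖ (norm_nonneg _) hyz hz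
    have h2 : (ε / 2) ^ (p + 1) ≤ (‖z‖ - ‖y‖) ^ (p + 1) :=
      Real.rpow_le_rpow (by positivity) hA (by linarith)
    have h3 : (ε / 2) ^ (p + 1) = ε ^ (p + 1) * (1 / 2) ^ (p + 1) := by
      rw [← Real.mul_rpow hε0 (by norm_num)]; congr 1; ring
    have h4 : K * (ε ^ (p + 1) * δ) ≤ c * (1 / 2) ^ (p + 1) * (ε ^ (p + 1) * 1) := by
      apply mul_le_mul (min_le_left _ _) _ (by positivity) (by positivity)
      gcongr
    have h5 := mul_le_mul_of_nonneg_left h2 hc.le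
    rw [h3] at h5
    linarith
  · -- norms are close
    have ht0 : 0 < ‖y‖ := by
      rcases (norm_nonneg y).eq_or_lt with h | h
      · have : ‖z - y‖ ≤ ‖z‖ + ‖y‖ := norm_sub_le _ _
        linarith
      · exact h
    have hs0 : 0 < ‖z‖ := by linarith
    set z' := ‖z‖⁻¹ • z with hz'
    set y' := ‖y‖⁻¹ • y with hy'
    have nz' : ‖z'‖ = 1 := by rw [hz', norm_smul, norm_inv, norm_norm]; field_simp
    have ny' : ‖y'‖ = 1 := by rw [hy', norm_smul, norm_inv, norm_norm]; field_simp
    have ez : z = ‖z‖ • z' := by rw [hz', smul_smul, mul_inv_cancel₀ hs0.ne', one_smul]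
    have ey : y = ‖y‖ • y' := by rw [hy', smul_smul, mul_inv_cancel₀ ht0.ne', one_smul]
    have d1 : z - y = (‖z‖ - ‖y‖) • z' + ‖y‖ • (z' - y') := by
      rw [sub_smul, smul_sub, ← ez, ← ey]; abel
    have d2 : y + z = (‖z‖ - ‖y‖) • z' + ‖y‖ • (z' + y') := by
      rw [sub_smul, smul_add, ← ez, ← ey]; abel
    have n1 : ε ≤ (‖z‖ - ‖y‖) + ‖y‖ * ‖z' - y'‖ := by
      rw [hε]
      calc ‖z - y‖ = ‖(‖z‖ - ‖y‖) • z' + ‖y‖ • (z' - y')‖ := by rw [← d1]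
        _ ≤ _ := norm_add_le _ _
        _ = _ := by
          rw [norm_smul (‖z‖ - ‖y‖) z', norm_smul ‖y‖, nz', norm_norm,
            Real.norm_of_nonneg (show 0 ≤ ‖z‖ - ‖y‖ by linarith), mul_one]
    have n2 : ‖y + z‖ ≤ (‖z‖ - ‖y‖) + ‖y‖ * ‖z' + y'‖ := by
      calc ‖y + z‖ = ‖(‖z‖ - ‖y‖) • z' + ‖y‖ • (z' + y')‖ := by rw [← d2]
        _ ≤ _ := norm_add_le _ _
        _ = _ := by
          rw [norm_smul (‖z‖ - ‖y‖) z', norm_smul ‖y‖, nz', norm_norm,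
            Real.norm_of_nonneg (show 0 ≤ ‖z‖ - ‖y‖ by linarith), mul_one]
    have n3 : ‖z' - y'‖ ≤ 2 := by
      have := norm_sub_le z' y'; linarith
    have n4 : ε / (2 * R) ≤ ‖z' - y'‖ := by
      rw [div_le_iff₀ (by positivity)]
      have : ‖y‖ * ‖z' - y'‖ ≤ R * ‖z' - y'‖ := by
        apply mul_le_mul_of_nonneg_right (by linarith) (norm_nonneg _)
      linarith
    have n5 : ε / 4 ≤ ‖y‖ := by nlinarith
    have n6 := modConvex_le nz' ny' n4
    rw [← hδ] at n6
    set u := (‖z‖ + ‖y‖) / 2 with hu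
    have n7 : ‖y + z‖ / 2 ≤ u - ε / 4 * δ := by
      have a1 : ‖y‖ * (‖z' + y'‖ / 2) ≤ ‖y‖ * (1 - δ) :=
        mul_le_mul_of_nonneg_left (by linarith) ht0.le
      have a2 : ε / 4 * δ ≤ ‖y‖ * δ := mul_le_mul_of_nonneg_right n5 hδ0.le
      rw [hu]; linarith
    have hv0 : 0 ≤ ‖y + z‖ / 2 := by positivity
    have hu0 : 0 < u := by rw [hu]; linarith
    have huε : ε / 4 ≤ u := by rw [hu]; linarith
    have n8 : (‖y + z‖ / 2) ^ p ≤ u ^ (p - 1) * (u - ε / 4 * δ) := by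
      rcases hv0.eq_or_lt with h | h
      · rw [← h, Real.zero_rpow (by linarith)]
        have : 0 ≤ u - ε / 4 * δ := by linarith
        positivity
      · have e : (‖y + z‖ / 2) ^ p = (‖y + z‖ / 2) ^ (p - 1) * (‖y + z‖ / 2) := by
          rw [← Real.rpow_add_one h.ne']; congr 1; ring
        rw [e]
        apply mul_le_mul _ n7 hv0 (by positivity)
        exact Real.rpow_le_rpow hv0 htri (by linarith)
    have n9 : u ^ p = u ^ (p - 1) * u := by
      rw [← Real.rpow_add_one hu0.ne']; congr 1; ring
    have n10 : (ε / 4) ^ (p - 1) ≤ u ^ (p - 1) :=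
      Real.rpow_le_rpow (by positivity) huε (by linarith)
    have n11 : (ε / 4) ^ (p - 1) * (ε / 4) = ε ^ p * (1 / 4) ^ p := by
      rw [← Real.rpow_add_one (by positivity), ← Real.mul_rpow hε0 (by norm_num)]
      congr 1 <;> ring
    have n12 : ε ^ p * (1 / 4) ^ p * δ ≤ u ^ (p - 1) * (ε / 4 * δ) := by
      rw [← n11, mul_assoc]
      apply mul_le_mul_of_nonneg_right n10 (by positivity)
    have n13 : K * (ε ^ (p + 1) * δ) ≤ 2 * (ε ^ p * (1 / 4) ^ p * δ) := by
      calc K * (ε ^ (p + 1) * δ) ≤ (1 / 4) ^ p / R * (ε ^ (p + 1) * δ) :=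
            mul_le_mul_of_nonneg_right (min_le_right _ _) (by positivity)
        _ = (ε / (2 * R)) * (2 * (ε ^ p * (1 / 4) ^ p * δ)) := by
            rw [Real.rpow_add_one hpos.ne']; field_simp
        _ ≤ 1 * (2 * (ε ^ p * (1 / 4) ^ p * δ)) :=
            mul_le_mul_of_nonneg_right hr1 (by positivity)
        _ = _ := one_mul _
    rw [n9] at hsc
    linarith

theorem norm_gap {X : Type*} [NormedAddCommGroup X] [NormedSpace ℝ X]
    (hconv : UnifConvex X) {p : ℝ} (hp : 1 < p) {R : ℝ} (hR : 0 < R) :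
    ∃ K > (0 : ℝ), ∀ y z : X, ‖y‖ ≤ R → ‖z‖ ≤ R →
      2 * ‖(1 / 2 : ℝ) • (y + z)‖ ^ p + K * (‖z - y‖ ^ (p + 1) * modConvex X (‖z - y‖ / (2 * R)))
        ≤ ‖z‖ ^ p + ‖y‖ ^ p := by
  obtain ⟨K, hK, h⟩ := norm_gap_aux hconv hp hR
  refine ⟨K, hK, fun y z hy hz => ?_⟩
  rcases le_total ‖y‖ ‖z‖ with h1 | h1
  · exact h y z h1 hz
  · have := h z y h1 hy
    rw [norm_sub_rev, add_comm z y] at this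
    linarith

theorem modSmooth_bound {X : Type*} [NormedAddCommGroup X] [NormedSpace ℝ X] {x h : X}
    (hx : x ≠ 0) (hh : h ≠ 0) :
    ‖x + h‖ + ‖x - h‖ ≤ 2 * ‖x‖ * (1 + modSmooth X (‖h‖ / ‖x‖)) := by
  have nx : 0 < ‖x‖ := norm_pos_iff.2 hx
  have nh : 0 < ‖h‖ := norm_pos_iff.2 hh
  have key : (‖‖x‖⁻¹ • x + (‖h‖ / ‖x‖) • (‖h‖⁻¹ • h)‖ + ‖‖x‖⁻¹ • x - (‖h‖ / ‖x‖) • (‖h‖⁻¹ • h)‖) / 2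
      - 1 ≤ modSmooth X (‖h‖ / ‖x‖) := by
    apply le_csSup
    · refine ⟨‖h‖ / ‖x‖, ?_⟩
      rintro d ⟨u, v, hu, hv, rfl⟩
      have h1 := norm_add_le u ((‖h‖ / ‖x‖) • v)
      have h2 := norm_sub_le u ((‖h‖ / ‖x‖) • v)
      rw [norm_smul, hu, hv, Real.norm_of_nonneg (by positivity)] at h1 h2
      linarith
    · refine ⟨_, _, ?_, ?_, rfl⟩
      · rw [norm_smul, norm_inv, norm_norm]; field_simp
      · rw [norm_smul, norm_inv, norm_norm]; field_simp
  have e : (‖h‖ / ‖x‖) • (‖h‖⁻¹ • h) = ‖x‖⁻¹ • h := by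
    rw [smul_smul]; congr 1; field_simp
  rw [e, ← smul_add, ← smul_sub, norm_smul, norm_smul, norm_inv, norm_norm] at key
  have h3 := mul_le_mul_of_nonneg_left key (show 0 ≤ 2 * ‖x‖ by positivity)
  have e2 : 2 * ‖x‖ * ((‖x‖⁻¹ * ‖x + h‖ + ‖x‖⁻¹ * ‖x - h‖) / 2 - 1) =
      ‖x + h‖ + ‖x - h‖ - 2 * ‖x‖ := by
    field_simp
  linarith

theorem dual_apply_le {X : Type*} [NormedAddCommGroup X] [NormedSpace ℝ X] {g : X →L[ℝ] ℝ}
    (hg : ‖g‖ ≤ 1) (x : X) : g x ≤ ‖x‖ := by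
  have h1 := g.le_opNorm x
  have h2 := le_abs_self (g x)
  rw [Real.norm_eq_abs] at h1
  have := mul_le_mul_of_nonneg_right hg (norm_nonneg x)
  linarith

theorem norm_hasFDerivAt {X : Type*} [NormedAddCommGroup X] [NormedSpace ℝ X]
    (hsm : UnifSmooth X) {x : X} (hx : x ≠ 0) {g : X →L[ℝ] ℝ} (hg : ‖g‖ ≤ 1) (hgx : g x = ‖x‖) :
    HasFDerivAt (fun y : X => ‖y‖) g x := by
  rw [hasFDerivAt_iff_isLittleO_nhds_zero, Asymptotics.isLittleO_iff]
  intro c hc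
  have nx : 0 < ‖x‖ := norm_pos_iff.2 hx
  have h1 : ∀ᶠ τ in 𝓝[>] (0 : ℝ), modSmooth X τ / τ < c / 2 :=
    hsm.eventually (gt_mem_nhds (by positivity))
  obtain ⟨η, hη, hsub⟩ := mem_nhdsGT_iff_exists_Ioo_subset.1 h1
  have hη : 0 < η := hη
  filter_upwards [Metric.ball_mem_nhds (0 : X) (show 0 < η * ‖x‖ by positivity)] with h hh
  rw [mem_ball_zero_iff] at hh
  rcases eq_or_ne h 0 with rfl | h0
  · simp
  have nh : 0 < ‖h‖ := norm_pos_iff.2 h0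
  have hτ : 0 < ‖h‖ / ‖x‖ := by positivity
  have hs : modSmooth X (‖h‖ / ‖x‖) / (‖h‖ / ‖x‖) < c / 2 :=
    hsub ⟨hτ, by rw [div_lt_iff₀ nx]; exact hh⟩
  rw [div_lt_iff₀ hτ] at hs
  have hb := modSmooth_bound hx h0
  have l1 := dual_apply_le hg (x + h)
  have l2 := dual_apply_le hg (x - h)
  rw [map_add, hgx] at l1
  rw [map_sub, hgx] at l2
  have h5 : 2 * ‖x‖ * modSmooth X (‖h‖ / ‖x‖) ≤ c * ‖h‖ := by
    have := mul_le_mul_of_nonneg_left hs.le (show 0 ≤ 2 * ‖x‖ by positivity)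
    have e : 2 * ‖x‖ * (c / 2 * (‖h‖ / ‖x‖)) = c * ‖h‖ := by field_simp
    linarith
  rw [Real.norm_of_nonneg (by linarith)]
  linarith

theorem duality_spec {X : Type*} [NormedAddCommGroup X] [NormedSpace ℝ X]
    (hsm : UnifSmooth X) {p : ℝ} (hp : 1 < p) (x : X) :
    ∃ g : X →L[ℝ] ℝ, ‖g‖ ≤ 1 ∧ g x = ‖x‖ ∧
      HasFDerivAt (fun y : X => 1 / p * ‖y‖ ^ p) (‖x‖ ^ (p - 1) • g) x := by
  obtain ⟨g, hg, hgx⟩ := exists_dual_vector'' ℝ x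
  refine ⟨g, hg, hgx, ?_⟩
  rcases eq_or_ne x 0 with rfl | hx
  · rw [norm_zero, Real.zero_rpow (by linarith), zero_smul,
      hasFDerivAt_iff_isLittleO_nhds_zero, Asymptotics.isLittleO_iff]
    intro c hc
    have ht : Tendsto (fun h : X => ‖h‖ ^ (p - 1)) (𝓝 0) (𝓝 0) := by
      have h1 : Continuous (fun h : X => ‖h‖ ^ (p - 1)) :=
        continuous_norm.rpow_const (fun _ => Or.inr (by linarith))
      have := h1.tendsto 0
      rwa [norm_zero, Real.zero_rpow (by linarith)] at this
    filter_upwards [ht.eventually (gt_mem_nhds hc)] with h hh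
    rcases eq_or_ne h 0 with rfl | h0
    · simp
    have nh : 0 < ‖h‖ := norm_pos_iff.2 h0
    have e : ‖h‖ ^ p = ‖h‖ ^ (p - 1) * ‖h‖ := by
      rw [← Real.rpow_add_one nh.ne']; congr 1; ring
    have hp1 : 1 / p ≤ 1 := by rw [div_le_one (by linarith)]; exact hp.le
    simp only [zero_add, norm_zero, Real.zero_rpow (show p ≠ 0 by linarith), mul_zero, sub_zero,
      zero_apply]
    rw [Real.norm_of_nonneg (by positivity), e]
    calc 1 / p * (‖h‖ ^ (p - 1) * ‖h‖) ≤ 1 * (‖h‖ ^ (p - 1) * ‖h‖) := by gcongr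
      _ ≤ c * ‖h‖ := by rw [one_mul]; gcongr
  · have h1 := (norm_hasFDerivAt hsm hx hg hgx).rpow_const (p := p)
      (Or.inl (norm_ne_zero_iff.2 hx))
    have h2 := h1.const_mul (1 / p)
    have e : (1 / p) • (p * ‖x‖ ^ (p - 1)) • g = ‖x‖ ^ (p - 1) • g := by
      rw [smul_smul]; congr 1; field_simp
    rw [e] at h2
    exact h2

theorem hasFDerivAt_dualityMap {X : Type*} [NormedAddCommGroup X] [NormedSpace ℝ X]
    (hsm : UnifSmooth X) {p : ℝ} (hp : 1 < p) (x : X) :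
    HasFDerivAt (fun y : X => 1 / p * ‖y‖ ^ p) (dualityMap p x) x := by
  obtain ⟨g, -, -, h⟩ := duality_spec hsm hp x
  exact h.differentiableAt.hasFDerivAt

theorem dualityMap_spec {X : Type*} [NormedAddCommGroup X] [NormedSpace ℝ X]
    (hsm : UnifSmooth X) {p : ℝ} (hp : 1 < p) (x : X) :
    ∃ g : X →L[ℝ] ℝ, ‖g‖ ≤ 1 ∧ g x = ‖x‖ ∧ dualityMap p x = ‖x‖ ^ (p - 1) • g := by
  obtain ⟨g, h1, h2, h⟩ := duality_spec hsm hp x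
  exact ⟨g, h1, h2, h.fderiv⟩

theorem norm_rpow_split {p : ℝ} (hp : 1 < p) {t : ℝ} (ht : 0 ≤ t) : t ^ p = t ^ (p - 1) * t := by
  rcases ht.eq_or_lt with h | h
  · rw [← h, Real.zero_rpow (by linarith), mul_zero]
  · rw [← Real.rpow_add_one h.ne']; congr 1; ring

theorem bregmanDist_nonneg {X : Type*} [NormedAddCommGroup X] [NormedSpace ℝ X]
    (hsm : UnifSmooth X) {p : ℝ} (hp : 1 < p) (z y : X) : 0 ≤ bregmanDist p z y := by
  obtain ⟨g, h1, h2, h⟩ := dualityMap_spec hsm hp y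
  unfold bregmanDist
  have h3 := dual_apply_le h1 z
  have h4 := scal_tangent hp (norm_nonneg y) (norm_nonneg z)
  have h5 : 0 ≤ ‖y‖ ^ (p - 1) := by positivity
  have h6 := mul_le_mul_of_nonneg_left h3 h5
  have hp0 : 0 < p := by linarith
  rw [h, smul_apply, map_sub, h2, smul_eq_mul]
  have h7 := mul_le_mul_of_nonneg_left h4 (show 0 ≤ 1 / p by positivity)
  have e : 1 / p * (‖y‖ ^ p + p * ‖y‖ ^ (p - 1) * (‖z‖ - ‖y‖)) =
     1 / p * ‖y‖ ^ p + ‖y‖ ^ (p - 1) * (‖z‖ - ‖y‖) := by field_simp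
  rw [e] at h7
  linarith

theorem bregmanDist_zero {X : Type*} [NormedAddCommGroup X] [NormedSpace ℝ X]
    (hsm : UnifSmooth X) {p : ℝ} (hp : 1 < p) (y : X) :
    bregmanDist p 0 y = (1 - 1 / p) * ‖y‖ ^ p := by
  obtain ⟨g, h1, h2, h⟩ := dualityMap_spec hsm hp y
  unfold bregmanDist
  rw [h, smul_apply, zero_sub, map_neg, h2, smul_eq_mul, norm_zero,
    Real.zero_rpow (by linarith), norm_rpow_split hp (norm_nonneg y)]
  ring

theorem bregmanDist_mid {X : Type*} [NormedAddCommGroup X] [NormedSpace ℝ X] (p : ℝ) (y z x : X) :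
    bregmanDist p z x + bregmanDist p y x - 2 * bregmanDist p ((1 / 2 : ℝ) • (y + z)) x =
      1 / p * (‖z‖ ^ p + ‖y‖ ^ p - 2 * ‖(1 / 2 : ℝ) • (y + z)‖ ^ p) := by
  unfold bregmanDist
  simp only [map_sub, map_smul, map_add, smul_eq_mul]
  ring

theorem bregmanDist_self {X : Type*} [NormedAddCommGroup X] [NormedSpace ℝ X] (p : ℝ) (x : X) :
    bregmanDist p x x = 0 := by
  unfold bregmanDist; simp

/-- Combined lower bounds. -/
theorem bregman_gap {X : Type*} [NormedAddCommGroup X] [NormedSpace ℝ X]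
    (hconv : UnifConvex X) {p : ℝ} (hp : 1 < p) {R : ℝ} (hR : 0 < R) :
    ∃ K > (0 : ℝ), ∀ y z x : X, ‖y‖ ≤ R → ‖z‖ ≤ R →
      K * (‖z - y‖ ^ (p + 1) * modConvex X (‖z - y‖ / (2 * R))) ≤
      bregmanDist p z x + bregmanDist p y x - 2 * bregmanDist p ((1 / 2 : ℝ) • (y + z)) x := by
  obtain ⟨K, hK, h⟩ := norm_gap hconv hp hR
  have hp0 : 0 < p := by linarith
  refine ⟨1 / p * K, by positivity, fun y z x hy hz => ?_⟩
  rw [bregmanDist_mid, mul_assoc]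
  apply mul_le_mul_of_nonneg_left _ (by positivity)
  linarith [h y z hy hz]

theorem bregman_lower {X : Type*} [NormedAddCommGroup X] [NormedSpace ℝ X]
    (hconv : UnifConvex X) (hsm : UnifSmooth X) {p : ℝ} (hp : 1 < p) {R : ℝ} (hR : 0 < R) :
    ∃ K > (0 : ℝ), ∀ y z : X, ‖y‖ ≤ R → ‖z‖ ≤ R →
      K * (‖z - y‖ ^ (p + 1) * modConvex X (‖z - y‖ / (2 * R))) ≤ bregmanDist p z y := by
  obtain ⟨K, hK, h⟩ := bregman_gap hconv hp hR
  refine ⟨K, hK, fun y z hy hz => ?_⟩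
  have h1 := h y z y hy hz
  have h2 := bregmanDist_nonneg hsm hp ((1 / 2 : ℝ) • (y + z)) y
  rw [bregmanDist_self] at h1
  linarith

theorem gap_small {X : Type*} [NormedAddCommGroup X] [NormedSpace ℝ X]
    (hconv : UnifConvex X) {p : ℝ} (hp : 1 < p) {R : ℝ} (hR : 0 < R) {ε : ℝ} (hε : 0 < ε) :
    ∃ η > (0 : ℝ), ∀ y z : X, ‖y‖ ≤ R → ‖z‖ ≤ R →
      ‖z - y‖ ^ (p + 1) * modConvex X (‖z - y‖ / (2 * R)) < η → ‖z - y‖ < ε := by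
  have := nontrivial_of_unifConvex hconv
  rcases lt_or_ge (2 * R) ε with h | h
  · refine ⟨1, one_pos, fun y z hy hz _ => ?_⟩
    have := norm_sub_le z y
    linarith
  have hr : ε / (2 * R) ≤ 1 := by rw [div_le_one (by positivity)]; exact h
  have hδ := hconv (ε / (2 * R)) (by positivity) (by linarith)
  refine ⟨ε ^ (p + 1) * modConvex X (ε / (2 * R)), by positivity, fun y z hy hz hlt => ?_⟩
  by_contra! hcon
  have h1 := norm_sub_le z y
  have hr' : ‖z - y‖ / (2 * R) ≤ 1 := by rw [div_le_one (by positivity)]; linarith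
  have h2 : modConvex X (ε / (2 * R)) ≤ modConvex X (‖z - y‖ / (2 * R)) :=
    modConvex_mono (by gcongr) (by linarith)
  have h3 : ε ^ (p + 1) ≤ ‖z - y‖ ^ (p + 1) := Real.rpow_le_rpow hε.le hcon (by linarith)
  have := mul_le_mul h3 h2 hδ.le (by positivity)
  linarith

theorem bregman_coercive {X : Type*} [NormedAddCommGroup X] [NormedSpace ℝ X]
    {p : ℝ} (hp : 1 < p) (x : X) :
    ∃ R > (0 : ℝ), ∀ m : X, bregmanDist p m x ≤ bregmanDist p 0 x + 1 → ‖m‖ ≤ R := by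
  have hp0 : 0 < p := by linarith
  set L := dualityMap p x with hL
  refine ⟨max 1 ((p * (‖L‖ + 1)) ^ (1 / (p - 1))), lt_max_of_lt_left one_pos, fun m hm => ?_⟩
  rcases le_or_gt ‖m‖ 1 with h | h
  · exact h.trans (le_max_left _ _)
  refine le_trans ?_ (le_max_right _ _)
  unfold bregmanDist at hm
  rw [← hL, map_sub, map_sub, map_zero, norm_zero, Real.zero_rpow (by linarith)] at hm
  have h1 : L m ≤ ‖L‖ * ‖m‖ := (le_abs_self _).trans (L.le_opNorm m)
  have h2 : 1 / p * ‖m‖ ^ p ≤ (‖L‖ + 1) * ‖m‖ := by linarith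
  rw [norm_rpow_split hp (norm_nonneg m)] at h2
  have h3 : ‖m‖ ^ (p - 1) ≤ p * (‖L‖ + 1) := by
    have h4 : (1 / p * ‖m‖ ^ (p - 1)) * ‖m‖ ≤ (‖L‖ + 1) * ‖m‖ := by linarith
    have h5 := le_of_mul_le_mul_right h4 (by linarith)
    rw [div_mul_eq_mul_div, one_mul, div_le_iff₀ hp0] at h5
    linarith
  have h6 := Real.rpow_le_rpow (by positivity) h3 (show 0 ≤ 1 / (p - 1) by
    have : 0 < p - 1 := by linarith
    positivity)
  rwa [← Real.rpow_mul (norm_nonneg m), mul_one_div, div_self (by linarith), Real.rpow_one] at h6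

theorem bregman_continuous {X : Type*} [NormedAddCommGroup X] [NormedSpace ℝ X]
    {p : ℝ} (hp : 1 < p) (x : X) : Continuous (fun m => bregmanDist p m x) := by
  unfold bregmanDist
  have : Continuous (fun h : X => ‖h‖ ^ p) :=
    continuous_norm.rpow_const (fun _ => Or.inr (by linarith))
  fun_prop

theorem exists_proj {X : Type*} [NormedAddCommGroup X] [NormedSpace ℝ X] [CompleteSpace X]
    (hconv : UnifConvex X) (hsm : UnifSmooth X) {p : ℝ} (hp : 1 < p)
    (M : Submodule ℝ X) (hM : IsClosed (M : Set X)) (x : X) :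
    ∃ y ∈ (M : Set X), ∀ m ∈ (M : Set X), bregmanDist p y x ≤ bregmanDist p m x := by
  obtain ⟨R, hR, hco⟩ := bregman_coercive hp x
  set φ : X → ℝ := fun m => bregmanDist p m x with hφ
  have hbdd : BddBelow (φ '' M) := by
    refine ⟨0, ?_⟩
    rintro _ ⟨m, -, rfl⟩
    exact bregmanDist_nonneg hsm hp m x
  have hne : (φ '' M).Nonempty := ⟨φ 0, 0, M.zero_mem, rfl⟩
  set I := sInf (φ '' M) with hI
  have hIle : ∀ m ∈ M, I ≤ φ m := fun m hm => csInf_le hbdd ⟨m, hm, rfl⟩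
  have hseq : ∀ n : ℕ, ∃ m ∈ M, φ m < I + 1 / ((n : ℝ) + 1) := by
    intro n
    obtain ⟨_, ⟨m, hm, rfl⟩, h⟩ := exists_lt_of_csInf_lt hne
      (show sInf (φ '' M) < I + 1 / ((n : ℝ) + 1) by
        have : 0 < 1 / ((n : ℝ) + 1) := by positivity
        linarith)
    exact ⟨m, hm, h⟩
  choose u huM hu using hseq
  have hub : ∀ n, ‖u n‖ ≤ R := by
    intro n
    apply hco
    have h1 := hu n
    have h2 := hIle 0 M.zero_mem
    have h3 : 1 / ((n : ℝ) + 1) ≤ 1 := by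
      rw [div_le_one (by positivity)]
      have : (0 : ℝ) ≤ n := n.cast_nonneg
      linarith
    change φ (u n) ≤ φ 0 + 1
    linarith
  obtain ⟨K, hK, hgap⟩ := bregman_gap hconv hp hR
  have hcau : CauchySeq u := by
    rw [Metric.cauchySeq_iff]
    intro ε hε
    obtain ⟨η, hη, hsmall⟩ := gap_small (X := X) hconv hp hR hε
    obtain ⟨n₀, hn₀⟩ := exists_nat_one_div_lt (show 0 < K * η / 2 by positivity)
    refine ⟨n₀, fun m hm n hn => ?_⟩
    rw [dist_eq_norm]
    apply hsmall _ _ (hub n) (hub m)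
    have h1 := hgap (u n) (u m) x (hub n) (hub m)
    have h2 := hIle ((1 / 2 : ℝ) • (u n + u m)) (M.smul_mem _ (M.add_mem (huM n) (huM m)))
    have b : ∀ k ≥ n₀, φ (u k) < I + K * η / 2 := by
      intro k hk
      have : 1 / ((k : ℝ) + 1) ≤ 1 / ((n₀ : ℝ) + 1) := by gcongr
      linarith [hu k]
    have h3 := b m hm
    have h4 := b n hn
    simp only [hφ] at h2 h3 h4
    have h5 : K * (‖u m - u n‖ ^ (p + 1) * modConvex X (‖u m - u n‖ / (2 * R))) < K * η := by
      linarith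
    exact lt_of_mul_lt_mul_left h5 hK.le
  obtain ⟨y, hy⟩ := cauchySeq_tendsto_of_complete hcau
  refine ⟨y, hM.mem_of_tendsto hy (Eventually.of_forall huM), fun m hm => ?_⟩
  refine le_trans ?_ (hIle m hm)
  have t1 : Tendsto (fun n => φ (u n)) atTop (𝓝 (φ y)) :=
    ((bregman_continuous hp x).tendsto y).comp hy
  have t2 : Tendsto (fun n : ℕ => I + 1 / ((n : ℝ) + 1)) atTop (𝓝 (I + 0)) :=
    tendsto_const_nhds.add tendsto_one_div_add_atTop_nhds_zero_nat
  rw [add_zero] at t2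
  exact le_of_tendsto_of_tendsto' t1 t2 (fun n => (hu n).le)

theorem proj_spec {X : Type*} [NormedAddCommGroup X] [NormedSpace ℝ X] [CompleteSpace X]
    (hconv : UnifConvex X) (hsm : UnifSmooth X) {p : ℝ} (hp : 1 < p)
    (M : Submodule ℝ X) (hM : IsClosed (M : Set X)) (x : X) :
    bregmanProj p (M : Set X) x ∈ M ∧
    (∀ m ∈ M, bregmanDist p (bregmanProj p (M : Set X) x) x ≤ bregmanDist p m x) ∧
    ∀ m ∈ M, dualityMap p (bregmanProj p (M : Set X) x) m = dualityMap p x m := by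
  have h := exists_proj hconv hsm hp M hM x
  have hs : bregmanProj p (M : Set X) x ∈ (M : Set X) ∧ ∀ m ∈ (M : Set X),
      bregmanDist p (bregmanProj p (M : Set X) x) x ≤ bregmanDist p m x :=
    Classical.epsilon_spec h
  refine ⟨hs.1, hs.2, fun m hm => ?_⟩
  obtain ⟨h1, h2⟩ := hs
  set y := bregmanProj p (M : Set X) x
  have hd : HasFDerivAt (fun w => bregmanDist p w x) (dualityMap p y - dualityMap p x) y := by
    have a1 := hasFDerivAt_dualityMap hsm hp y
    have a2 : HasFDerivAt (fun w : X => dualityMap p x (w - x)) (dualityMap p x) y := by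
      have := (dualityMap p x).hasFDerivAt.comp y ((hasFDerivAt_id y).sub_const x)
      rw [ContinuousLinearMap.comp_id] at this
      exact this
    exact (a1.sub_const (1 / p * ‖x‖ ^ p)).sub a2
  have hline : HasDerivAt (fun t : ℝ => y + t • m) m 0 := by
    have := ((hasDerivAt_id (0 : ℝ)).smul_const m).const_add y
    simpa using this
  have hd' : HasDerivAt (fun t : ℝ => bregmanDist p (y + t • m) x)
      ((dualityMap p y - dualityMap p x) m) 0 := by
    have : HasFDerivAt (fun w => bregmanDist p w x) (dualityMap p y - dualityMap p x)
      (y + (0 : ℝ) • m) := by simpa using hd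
    exact this.comp_hasDerivAt (0 : ℝ) hline
  have hmin : IsLocalMin (fun t : ℝ => bregmanDist p (y + t • m) x) 0 := by
    refine Eventually.of_forall fun t => ?_
    have := h2 (y + t • m) (M.add_mem h1 (M.smul_mem t hm))
    simpa using this
  have := hmin.hasDerivAt_eq_zero hd'
  rw [sub_apply] at this
  linarith

theorem three_point {X : Type*} [NormedAddCommGroup X] [NormedSpace ℝ X] (p : ℝ) (m y x : X)
    (h : dualityMap p y (m - y) = dualityMap p x (m - y)) :
    bregmanDist p m x = bregmanDist p m y + bregmanDist p y x := by
  unfold bregmanDist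
  have e : m - x = (m - y) + (y - x) := by abel
  rw [e, map_add, h]
  ring

theorem statement14 {X : Type*} [NormedAddCommGroup X] [NormedSpace ℝ X] [CompleteSpace X]
    (hconv : UnifConvex X) (hsmooth : UnifSmooth X) (p : ℝ) (hp : 1 < p)
    (M N : Submodule ℝ X) (hM : IsClosed (M : Set X)) (hN : IsClosed (N : Set X))
    (hreg : BoundedlyLinearBregmanRegular p M N)
    (a : X) (x : ℕ → X) (hx0 : x 0 = a)
    (hodd : ∀ n : ℕ, x (2 * n + 1) = bregmanProj p (M : Set X) (x (2 * n)))
    (heven : ∀ n : ℕ, x (2 * n + 2) = bregmanProj p (N : Set X) (x (2 * n + 1))) :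
    Filter.Tendsto x Filter.atTop
      (𝓝 (bregmanProj p ((M ⊓ N : Submodule ℝ X) : Set X) a)) ∧
    ∀ ρ σ : ℝ, PowerConvex X ρ → PowerSmooth X σ → σ ≤ p → p ≤ ρ →
      (∃ C > (0 : ℝ), ∃ q ∈ Set.Ioo (0 : ℝ) 1, ∀ n : ℕ,
        bregmanDist p (bregmanProj p ((M ⊓ N : Submodule ℝ X) : Set X) a) (x n) ≤ C * q ^ n) ∧
      (∃ C' > (0 : ℝ), ∃ q' ∈ Set.Ioo (0 : ℝ) 1, ∀ n : ℕ,
        ‖bregmanProj p ((M ⊓ N : Submodule ℝ X) : Set X) a - x n‖ ≤ C' * q' ^ n) := by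
  set P : Submodule ℝ X := M ⊓ N with hPdef
  have hP : IsClosed (P : Set X) := by
    rw [hPdef, Submodule.coe_inf]; exact hM.inter hN
  have hp0 : 0 < p := by linarith
  obtain ⟨z, hz⟩ : ∃ z, z = bregmanProj p (P : Set X) a := ⟨_, rfl⟩
  rw [← hz]
  have hzs := proj_spec hconv hsmooth hp P hP a
  rw [← hz] at hzs
  obtain ⟨hzP, -, hzj⟩ := hzs
  -- one step of the iteration
  have hstep : ∀ n, ∃ L : Submodule ℝ X, (P ≤ L) ∧ IsClosed (L : Set X) ∧
      x (n + 1) = bregmanProj p (L : Set X) (x n) := by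
    intro n
    rcases Nat.even_or_odd' n with ⟨k, hk | hk⟩
    · subst hk
      exact ⟨M, inf_le_left, hM, hodd k⟩
    · subst hk
      exact ⟨N, inf_le_right, hN, heven k⟩
  have hj1 : ∀ n, ∀ m ∈ P, dualityMap p (x (n + 1)) m = dualityMap p (x n) m := by
    intro n m hm
    obtain ⟨L, hPL, hL, hx⟩ := hstep n
    rw [hx]
    exact (proj_spec hconv hsmooth hp L hL (x n)).2.2 m (hPL hm)
  have hj : ∀ n, ∀ m ∈ P, dualityMap p (x n) m = dualityMap p z m := by
    intro n
    induction n with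
    | zero => intro m hm; rw [hx0, hzj m hm]
    | succ n ih => intro m hm; rw [hj1 n m hm, ih m hm]
  have hdec : ∀ n, ∀ m ∈ P, bregmanDist p m (x n) =
      bregmanDist p m (x (n + 1)) + bregmanDist p (x (n + 1)) (x n) := by
    intro n m hm
    obtain ⟨L, hPL, hL, hx⟩ := hstep n
    obtain ⟨h1, -, h2⟩ := proj_spec hconv hsmooth hp L hL (x n)
    rw [← hx] at h1 h2
    exact three_point p m _ _ (h2 _ (L.sub_mem (hPL hm) h1))
  have hDnn := fun u v : X => bregmanDist_nonneg hsmooth hp u v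
  -- boundedness of the sequence
  have hbd : ∀ n, ‖x n‖ ≤ ‖a‖ := by
    intro n
    induction n with
    | zero => rw [hx0]
    | succ n ih =>
      refine le_trans ?_ ih
      have h1 := hdec n 0 P.zero_mem
      rw [bregmanDist_zero hsmooth hp, bregmanDist_zero hsmooth hp] at h1
      have h2 := hDnn (x (n + 1)) (x n)
      have h3 : 0 < 1 - 1 / p := by
        have : 1 / p < 1 := by rw [div_lt_one hp0]; exact hp
        linarith
      have h4 : ‖x (n + 1)‖ ^ p ≤ ‖x n‖ ^ p := by
        apply le_of_mul_le_mul_left _ h3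
        linarith
      exact (Real.rpow_le_rpow_iff (norm_nonneg _) (norm_nonneg _) hp0).1 h4
  obtain ⟨κ, hκ, hregS⟩ := hreg (Metric.closedBall 0 ‖a‖) Metric.isBounded_closedBall
  have hself : ∀ (L : Submodule ℝ X), IsClosed (L : Set X) → ∀ y ∈ L,
      bregmanDistSet p (L : Set X) y ≤ 0 := by
    intro L hL y hy
    have := (proj_spec hconv hsmooth hp L hL y).2.1 y hy
    rwa [bregmanDist_self] at this
  have hmax : ∀ n, max (bregmanDistSet p (M : Set X) (x (n + 1)))
      (bregmanDistSet p (N : Set X) (x (n + 1))) ≤ bregmanDist p (x (n + 2)) (x (n + 1)) := by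
    intro n
    rcases Nat.even_or_odd' n with ⟨k, hk | hk⟩
    · subst hk
      apply max_le
      · refine (hself M hM _ ?_).trans (hDnn _ _)
        rw [hodd k]; exact (proj_spec hconv hsmooth hp M hM _).1
      · rw [heven k]; exact le_refl _
    · subst hk
      have e1 : x (2 * k + 1 + 2) = bregmanProj p (M : Set X) (x (2 * k + 1 + 1)) :=
        hodd (k + 1)
      apply max_le
      · rw [e1]; exact le_refl _
      · refine (hself N hN _ ?_).trans (hDnn _ _)
        have : x (2 * k + 1 + 1) = bregmanProj p (N : Set X) (x (2 * k + 1)) := heven k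
        rw [this]; exact (proj_spec hconv hsmooth hp N hN _).1
  have hlow : ∀ n, bregmanDist p z (x n) ≤ bregmanDistSet p (P : Set X) (x n) := by
    intro n
    have hw := (proj_spec hconv hsmooth hp P hP (x n)).1
    unfold bregmanDistSet
    have h1 := three_point p (bregmanProj p (P : Set X) (x n)) z (x n)
      (hj n _ (P.sub_mem hw hzP)).symm
    rw [h1]
    linarith [hDnn (bregmanProj p (P : Set X) (x n)) z]
  -- contraction
  set κ' := max κ 2 with hκ'
  have hκ2 : 2 ≤ κ' := le_max_right _ _
  obtain ⟨q, hq⟩ : ∃ q, q = 1 - 1 / κ' := ⟨_, rfl⟩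
  have hq0 : 0 < q := by
    have : 1 / κ' ≤ 1 / 2 := by gcongr
    linarith
  have hq1 : q < 1 := by
    have : 0 < 1 / κ' := by positivity
    linarith
  have hcontr : ∀ n, bregmanDist p z (x (n + 2)) ≤ q * bregmanDist p z (x (n + 1)) := by
    intro n
    have h1 := hregS (x (n + 1)) (by rw [mem_closedBall_zero_iff]; exact hbd _)
    have h2 := hdec (n + 1) z hzP
    have h3 := (hlow (n + 1)).trans (h1.trans (mul_le_mul_of_nonneg_left (hmax n) hκ.le))
    have h4 : bregmanDist p z (x (n + 1)) ≤ κ' * bregmanDist p (x (n + 2)) (x (n + 1)) :=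
      h3.trans (mul_le_mul_of_nonneg_right (le_max_left _ _) (hDnn _ _))
    have h5 : bregmanDist p z (x (n + 1)) / κ' ≤ bregmanDist p (x (n + 2)) (x (n + 1)) := by
      rw [div_le_iff₀ (by linarith)]; linarith
    have e : q * bregmanDist p z (x (n + 1)) =
        bregmanDist p z (x (n + 1)) - bregmanDist p z (x (n + 1)) / κ' := by
      rw [hq]; ring
    rw [e]
    linarith
  obtain ⟨C, hC⟩ : ∃ C, C = (bregmanDist p z a + 1) / q := ⟨_, rfl⟩
  have hda := hDnn z a
  have hC0 : 0 < C := by rw [hC]; positivity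
  have hCq : C * q = bregmanDist p z a + 1 := by rw [hC]; field_simp
  have hlin1 : ∀ n, bregmanDist p z (x (n + 1)) ≤ C * q ^ (n + 1) := by
    intro n
    induction n with
    | zero =>
      have h1 := hdec 0 z hzP
      have h2 := hDnn (x (0 + 1)) (x 0)
      rw [hx0] at h1 h2
      rw [zero_add, pow_one, hCq]
      rw [zero_add] at h1 h2
      linarith
    | succ n ih =>
      refine (hcontr n).trans ?_
      have := mul_le_mul_of_nonneg_left ih hq0.le
      rw [pow_succ]; linarith
  have hlin : ∀ n, bregmanDist p z (x n) ≤ C * q ^ n := by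
    intro n
    rcases n with _ | n
    · rw [hx0, pow_zero, mul_one]
      nlinarith
    · exact hlin1 n
  -- lower bound for the Bregman distance
  obtain ⟨R, hRdef⟩ : ∃ R, R = ‖a‖ + ‖z‖ + 1 := ⟨_, rfl⟩
  have hR : 0 < R := by rw [hRdef]; positivity
  have hzR : ‖z‖ ≤ R := by rw [hRdef]; linarith [norm_nonneg a]
  have hxR : ∀ n, ‖x n‖ ≤ R := by
    intro n; rw [hRdef]; linarith [norm_nonneg z, hbd n]
  obtain ⟨K, hK, hlower⟩ := bregman_lower (X := X) hconv hsmooth hp hR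
  refine ⟨?_, ?_⟩
  · rw [Metric.tendsto_atTop]
    intro ε hε
    obtain ⟨η, hη, hsmall⟩ := gap_small (X := X) hconv hp hR hε
    have ht : Tendsto (fun n => C * q ^ n) atTop (𝓝 (C * 0)) :=
      (tendsto_pow_atTop_nhds_zero_of_lt_one hq0.le hq1).const_mul C
    rw [mul_zero] at ht
    obtain ⟨n₀, hn₀⟩ := eventually_atTop.1
      (ht.eventually (gt_mem_nhds (show 0 < K * η by positivity)))
    refine ⟨n₀, fun n hn => ?_⟩
    rw [dist_comm, dist_eq_norm]
    apply hsmall _ _ (hxR n) hzR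
    have h1 := hlower (x n) z (hxR n) hzR
    have h2 := hlin n
    have h3 := hn₀ n hn
    exact lt_of_mul_lt_mul_left (h1.trans_lt (h2.trans_lt h3)) hK.le
  · intro ρ σ hρ _ _ hpρ
    refine ⟨⟨C, hC0, q, ⟨hq0, hq1⟩, hlin⟩, ?_⟩
    obtain ⟨c, hc, hmod⟩ := hρ
    obtain ⟨r, hr⟩ : ∃ r, r = p + 1 + ρ := ⟨_, rfl⟩
    have hr0 : 0 < r := by rw [hr]; linarith
    have hRρ : 0 < (2 * R) ^ ρ := by positivity
    obtain ⟨A, hA⟩ : ∃ A, A = C * (2 * R) ^ ρ / (K * c) := ⟨_, rfl⟩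
    have hA0 : 0 < A := by rw [hA]; positivity
    have hmain : ∀ n, ‖z - x n‖ ^ r ≤ A * q ^ n := by
      intro n
      have h1 := (hlower (x n) z (hxR n) hzR).trans (hlin n)
      have h2 := norm_sub_le z (x n)
      have h3 : ‖z - x n‖ / (2 * R) ≤ 1 := by
        rw [div_le_one (by positivity)]; linarith [hxR n]
      have h4 := hmod (‖z - x n‖ / (2 * R)) ⟨by positivity, by linarith⟩
      rw [Real.div_rpow (norm_nonneg _) (by positivity)] at h4
      have h5 : K * (‖z - x n‖ ^ (p + 1) * (c * (‖z - x n‖ ^ ρ / (2 * R) ^ ρ))) ≤ C * q ^ n := by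
        refine le_trans ?_ h1
        gcongr
      have h6 : ‖z - x n‖ ^ r = ‖z - x n‖ ^ (p + 1) * ‖z - x n‖ ^ ρ := by
        rw [hr]; exact Real.rpow_add_of_nonneg (norm_nonneg _) (by linarith) (by linarith)
      have h7 : ‖z - x n‖ ^ r = ((2 * R) ^ ρ / (K * c)) *
          (K * (‖z - x n‖ ^ (p + 1) * (c * (‖z - x n‖ ^ ρ / (2 * R) ^ ρ)))) := by
        rw [h6]; field_simp
      rw [h7]
      calc _ ≤ ((2 * R) ^ ρ / (K * c)) * (C * q ^ n) :=
            mul_le_mul_of_nonneg_left h5 (by positivity)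
        _ = A * q ^ n := by rw [hA]; ring
    refine ⟨A ^ (1 / r), by positivity, q ^ (1 / r), ⟨by positivity,
      Real.rpow_lt_one hq0.le hq1 (by positivity)⟩, fun n => ?_⟩
    have h1 := Real.rpow_le_rpow (by positivity) (hmain n) (show 0 ≤ 1 / r by positivity)
    rw [← Real.rpow_mul (norm_nonneg _), mul_one_div, div_self hr0.ne', Real.rpow_one,
      Real.mul_rpow hA0.le (by positivity)] at h1
    have e : (q ^ n) ^ (1 / r) = (q ^ (1 / r)) ^ n := by
      rw [← Real.rpow_natCast, ← Real.rpow_natCast, ← Real.rpow_mul hq0.le,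
        ← Real.rpow_mul hq0.le, mul_comm]
    rwa [e] at h1
end
end

section
/- Let X be a real Banach space that is 2-convex and 2-smooth, and let M, N be closed linear subspaces of X such that M + N is closed. Then for every x ∈ X, the sequence defined by x₀ = x, x_{2n+1} = Π²_M x_{2n}, x_{2n} = Π²_N x_{2n−1} converges in norm to Π²_{M∩N} x, and there exist constants C > 0 and q ∈ (0,1) with D_2(Π²_{M∩N} x, x_n) ≤ C q^n for all n, and constants C' > 0, q' ∈ (0,1) with ‖Π²_{M∩N} x − x_n‖ ≤ C' (q')^n for all n; that is, the sequence converges linearly. -/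
open Filter Topology

noncomputable section

variable {X : Type*} [NormedAddCommGroup X] [NormedSpace ℝ X]

theorem aux_fun_eq : (fun y : X => 1 / (2:ℝ) * ‖y‖ ^ (2:ℝ)) = fun y : X => 1 / (2:ℝ) * ‖y‖ ^ 2 := by
  funext y
  rw [Real.rpow_two]

theorem aux_breg (x y : X) : bregmanDist 2 x y =
    1 / 2 * ‖x‖ ^ 2 - 1 / 2 * ‖y‖ ^ 2 - dualityMap 2 y (x - y) := by
  unfold bregmanDist
  rw [Real.rpow_two, Real.rpow_two]

/-- Quadratic smoothness inequality. -/
theorem aux_smooth (h : PowerSmooth X 2) : ∃ K > (0:ℝ), ∀ x h : X,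
    1 / 2 * ‖x + h‖ ^ 2 + 1 / 2 * ‖x - h‖ ^ 2 - ‖x‖ ^ 2 ≤ K * ‖h‖ ^ 2 := by
  obtain ⟨-, C, hC, hb⟩ := h
  refine ⟨2 * C + C ^ 2 + 3, by positivity, fun x h => ?_⟩
  have t1 : ‖x + h‖ ≤ ‖x‖ + ‖h‖ := norm_add_le x h
  have t2 : ‖x - h‖ ≤ ‖x‖ + ‖h‖ := norm_sub_le x h
  have n1 := norm_nonneg (x + h)
  have n2 := norm_nonneg (x - h)
  have n3 := norm_nonneg x
  have n4 := norm_nonneg h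
  by_cases hle : ‖x‖ ≤ ‖h‖
  · have s1 : ‖x + h‖ ^ 2 ≤ (‖x‖ + ‖h‖) ^ 2 := pow_le_pow_left₀ n1 t1 2
    have s2 : ‖x - h‖ ^ 2 ≤ (‖x‖ + ‖h‖) ^ 2 := pow_le_pow_left₀ n2 t2 2
    have : 0 ≤ (2 * C + C ^ 2) * ‖h‖ ^ 2 := by positivity
    nlinarith [mul_le_mul_of_nonneg_right hle n4]
  push Not at hle
  by_cases h0 : h = 0
  · subst h0
    simp
    nlinarith
  have hx : 0 < ‖x‖ := lt_of_le_of_lt n4 hle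
  have hh : 0 < ‖h‖ := norm_pos_iff.mpr h0
  have key : ‖x + h‖ + ‖x - h‖ ≤ 2 * (‖x‖ + C * ‖h‖ ^ 2 / ‖x‖) := by
    have hτ : ‖h‖ / ‖x‖ ∈ Set.Icc (0:ℝ) 1 := ⟨by positivity, (div_le_one hx).mpr hle.le⟩
    have h1 := hb _ hτ
    rw [Real.rpow_two] at h1
    have h2 : (‖‖x‖⁻¹ • x + (‖h‖ / ‖x‖) • (‖h‖⁻¹ • h)‖
        + ‖‖x‖⁻¹ • x - (‖h‖ / ‖x‖) • (‖h‖⁻¹ • h)‖) / 2 - 1 ≤ modSmooth X (‖h‖ / ‖x‖) := by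
      apply le_csSup
      · refine ⟨‖h‖ / ‖x‖, ?_⟩
        rintro d ⟨u, v, hu, hv, rfl⟩
        have a1 := norm_add_le u ((‖h‖ / ‖x‖) • v)
        have a2 := norm_sub_le u ((‖h‖ / ‖x‖) • v)
        rw [norm_smul, hu, hv, Real.norm_of_nonneg hτ.1] at a1 a2
        linarith
      · refine ⟨_, _, ?_, ?_, rfl⟩
        · rw [norm_smul, norm_inv, norm_norm, inv_mul_cancel₀ hx.ne']
        · rw [norm_smul, norm_inv, norm_norm, inv_mul_cancel₀ hh.ne']
    have e : (‖h‖ / ‖x‖) • (‖h‖⁻¹ • h) = ‖x‖⁻¹ • h := by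
      rw [smul_smul]; congr 1; field_simp
    rw [e, ← smul_add, ← smul_sub, norm_smul, norm_smul, norm_inv, norm_norm] at h2
    have h3 := h2.trans h1
    have h4 := mul_le_mul_of_nonneg_left h3 hx.le
    have e1 : ‖x‖ * ((‖x‖⁻¹ * ‖x + h‖ + ‖x‖⁻¹ * ‖x - h‖) / 2 - 1)
        = (‖x + h‖ + ‖x - h‖) / 2 - ‖x‖ := by field_simp
    have e2 : ‖x‖ * (C * (‖h‖ / ‖x‖) ^ 2) = C * ‖h‖ ^ 2 / ‖x‖ := by field_simp
    rw [e1, e2] at h4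
    linarith
  have hd : |‖x + h‖ - ‖x - h‖| ≤ 2 * ‖h‖ := by
    have := abs_norm_sub_norm_le (x + h) (x - h)
    have e : x + h - (x - h) = (2:ℝ) • h := by rw [two_smul]; abel
    rw [e, norm_smul] at this
    simpa using this
  have hd2 : (‖x + h‖ - ‖x - h‖) ^ 2 ≤ (2 * ‖h‖) ^ 2 := sq_le_sq' (by linarith [(abs_le.mp hd).1]) (abs_le.mp hd).2
  have hs2 : (‖x + h‖ + ‖x - h‖) ^ 2 ≤ (2 * (‖x‖ + C * ‖h‖ ^ 2 / ‖x‖)) ^ 2 :=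
    pow_le_pow_left₀ (by positivity) key 2
  have e3 : (2 * (‖x‖ + C * ‖h‖ ^ 2 / ‖x‖)) ^ 2
      = 4 * (‖x‖ ^ 2 + 2 * C * ‖h‖ ^ 2 + C ^ 2 * ‖h‖ ^ 2 * (‖h‖ / ‖x‖) ^ 2) := by
    field_simp
    ring
  have e4 : (‖h‖ / ‖x‖) ^ 2 ≤ 1 := pow_le_one₀ (by positivity) ((div_le_one hx).mpr hle.le)
  have e5 : C ^ 2 * ‖h‖ ^ 2 * (‖h‖ / ‖x‖) ^ 2 ≤ C ^ 2 * ‖h‖ ^ 2 :=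
    mul_le_of_le_one_right (by positivity) e4
  nlinarith

/-- Quadratic convexity, ordered version. -/
theorem aux_convex_ord {c : ℝ} (hc : 0 < c)
    (hb : ∀ ε ∈ Set.Icc (0 : ℝ) 2, c * ε ^ (2:ℝ) ≤ modConvex X ε) (x y : X) (hxy : ‖y‖ ≤ ‖x‖) :
    (‖x + y‖ / 2) ^ 2 ≤ (‖x‖ ^ 2 + ‖y‖ ^ 2) / 2 - min (1 / 8) (c / 2) * ‖x - y‖ ^ 2 := by
  have k1 : min (1 / 8) (c / 2) ≤ 1 / 8 := min_le_left _ _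
  have k2 : min (1 / 8) (c / 2) ≤ c / 2 := min_le_right _ _
  have k0 : 0 < min (1 / 8) (c / 2) := lt_min (by norm_num) (by positivity)
  set k := min (1 / 8) (c / 2)
  by_cases hy : y = 0
  · subst hy
    simp
    nlinarith [sq_nonneg ‖x‖]
  have ht : 0 < ‖y‖ := norm_pos_iff.mpr hy
  have hs : 0 < ‖x‖ := ht.trans_le hxy
  set s := ‖x‖
  set t := ‖y‖
  obtain ⟨u, hu⟩ : ∃ u, u = s⁻¹ • x := ⟨_, rfl⟩
  obtain ⟨v, hv⟩ : ∃ v, v = t⁻¹ • y := ⟨_, rfl⟩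
  have hxu : x = s • u := by rw [hu, smul_smul, mul_inv_cancel₀ hs.ne', one_smul]
  have hyv : y = t • v := by rw [hv, smul_smul, mul_inv_cancel₀ ht.ne', one_smul]
  have nu : ‖u‖ = 1 := by
    rw [hu, norm_smul, norm_inv, Real.norm_of_nonneg hs.le, inv_mul_cancel₀ hs.ne']
  have nv : ‖v‖ = 1 := by
    rw [hv, norm_smul, norm_inv, Real.norm_of_nonneg ht.le, inv_mul_cancel₀ ht.ne']
  have huv : ‖u + v‖ / 2 ≤ 1 - c * ‖u - v‖ ^ 2 := by
    have h1 := hb ‖u - v‖ ⟨norm_nonneg _, by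
      have := norm_sub_le u v
      linarith⟩
    rw [Real.rpow_two] at h1
    have h2 : modConvex X ‖u - v‖ ≤ 1 - ‖u + v‖ / 2 := by
      apply csInf_le
      · refine ⟨0, ?_⟩
        rintro d ⟨p, q, hp, hq, -, rfl⟩
        have := norm_add_le p q
        linarith
      · exact ⟨u, v, nu, nv, le_rfl, rfl⟩
    linarith
  have a1 : ‖x + y‖ ≤ t * ‖u + v‖ + (s - t) := by
    have e : x + y = t • (u + v) + (s - t) • u := by
      nth_rewrite 1 [hxu, hyv]
      rw [smul_add, sub_smul]; abel
    have := norm_add_le (t • (u + v)) ((s - t) • u)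
    rw [norm_smul, norm_smul, nu, Real.norm_of_nonneg ht.le,
      Real.norm_of_nonneg (sub_nonneg.mpr hxy)] at this
    rw [e]
    linarith
  have a2 : ‖x - y‖ ≤ t * ‖u - v‖ + (s - t) := by
    have e : x - y = t • (u - v) + (s - t) • u := by
      nth_rewrite 1 [hxu, hyv]
      rw [smul_sub, sub_smul]; abel
    have := norm_add_le (t • (u - v)) ((s - t) • u)
    rw [norm_smul, norm_smul, nu, Real.norm_of_nonneg ht.le,
      Real.norm_of_nonneg (sub_nonneg.mpr hxy)] at this
    rw [e]
    linarith
  have n0 := norm_nonneg (u - v)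
  generalize ‖u - v‖ = d at *
  obtain ⟨B, hB⟩ : ∃ B, B = c * t * d ^ 2 := ⟨_, rfl⟩
  have a3 : ‖x + y‖ / 2 ≤ (s + t) / 2 - B := by
    have := mul_le_mul_of_nonneg_left huv ht.le
    rw [hB]
    nlinarith
  have n1 := norm_nonneg (x + y)
  have n2 := norm_nonneg (x - y)
  have B0 : 0 ≤ B := by rw [hB]; positivity
  have a4 : (‖x + y‖ / 2) ^ 2 ≤ ((s + t) / 2 - B) ^ 2 := pow_le_pow_left₀ (by positivity) a3 2
  have a5 : ((s + t) / 2 - B) ^ 2 ≤ ((s + t) / 2) ^ 2 - (s + t) / 2 * B := by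
    have : 0 ≤ (s + t) / 2 - B := le_trans (by positivity) a3
    nlinarith [mul_nonneg this B0]
  have a6 : c * (t * d) ^ 2 ≤ (s + t) / 2 * B := by
    have : t * B ≤ (s + t) / 2 * B := mul_le_mul_of_nonneg_right (by linarith) B0
    calc c * (t * d) ^ 2 = t * B := by rw [hB]; ring
      _ ≤ _ := this
  have a7 : ‖x - y‖ ^ 2 ≤ 2 * (t * d) ^ 2 + 2 * (s - t) ^ 2 := by
    have := pow_le_pow_left₀ n2 a2 2
    nlinarith [sq_nonneg (t * d - (s - t))]
  have a8 : k * ‖x - y‖ ^ 2 ≤ k * (2 * (t * d) ^ 2 + 2 * (s - t) ^ 2) :=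
    mul_le_mul_of_nonneg_left a7 k0.le
  have a9 : k * (t * d) ^ 2 ≤ c / 2 * (t * d) ^ 2 := mul_le_mul_of_nonneg_right k2 (sq_nonneg _)
  have a10 : k * (s - t) ^ 2 ≤ 1 / 8 * (s - t) ^ 2 := mul_le_mul_of_nonneg_right k1 (sq_nonneg _)
  nlinarith

/-- Quadratic convexity at midpoints. -/
theorem aux_convex (h : PowerConvex X 2) : ∃ k > (0:ℝ), ∀ x y : X,
    1 / 2 * ‖(1 / 2 : ℝ) • (x + y)‖ ^ 2 ≤
      (1 / 2 * ‖x‖ ^ 2 + 1 / 2 * ‖y‖ ^ 2) / 2 - k * ‖x - y‖ ^ 2 := by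
  obtain ⟨c, hc, hb⟩ := h
  refine ⟨min (1 / 8) (c / 2) / 2, by positivity, fun x y => ?_⟩
  have e : ‖(1 / 2 : ℝ) • (x + y)‖ = ‖x + y‖ / 2 := by
    rw [norm_smul]; norm_num; ring
  rw [e]
  rcases le_total ‖y‖ ‖x‖ with hle | hle
  · have := aux_convex_ord hc hb x y hle
    linarith
  · have := aux_convex_ord hc hb y x hle
    rw [add_comm y x, norm_sub_rev y x] at this
    linarith

/-- The two-sided quadratic bound on the Bregman distance. -/
theorem aux_upper {K : ℝ} (hK : ∀ x h : X,
    1 / 2 * ‖x + h‖ ^ 2 + 1 / 2 * ‖x - h‖ ^ 2 - ‖x‖ ^ 2 ≤ K * ‖h‖ ^ 2) (y x : X) :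
    0 ≤ bregmanDist 2 y x ∧ bregmanDist 2 y x ≤ K * ‖y - x‖ ^ 2 := by
  obtain ⟨g0, hg0, hgx⟩ := exists_dual_vector'' ℝ x
  simp only [RCLike.ofReal_real_eq_id, id] at hgx
  obtain ⟨g, hg⟩ : ∃ g : X →L[ℝ] ℝ, g = ‖x‖ • g0 := ⟨_, rfl⟩
  have low : ∀ h : X, 0 ≤ 1 / 2 * ‖x + h‖ ^ 2 - 1 / 2 * ‖x‖ ^ 2 - g h := by
    intro h
    have h1 : g0 (x + h) ≤ ‖x + h‖ := by
      have := (le_abs_self _).trans (g0.le_opNorm (x + h))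
      nlinarith [norm_nonneg (x + h)]
    rw [map_add, hgx] at h1
    have h2 : g h = ‖x‖ * g0 h := by rw [hg]; simp
    rw [h2]
    nlinarith [mul_le_mul_of_nonneg_left h1 (norm_nonneg x), sq_nonneg (‖x + h‖ - ‖x‖)]
  have up : ∀ h : X, 1 / 2 * ‖x + h‖ ^ 2 - 1 / 2 * ‖x‖ ^ 2 - g h ≤ K * ‖h‖ ^ 2 := by
    intro h
    have h1 := low (-h)
    rw [map_neg, ← sub_eq_add_neg] at h1
    linarith [hK x h]
  have hd : HasFDerivAt (fun y : X => 1 / (2:ℝ) * ‖y‖ ^ 2) g x := by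
    rw [hasFDerivAt_iff_isLittleO_nhds_zero]
    have hO : (fun h : X => 1 / (2:ℝ) * ‖x + h‖ ^ 2 - 1 / 2 * ‖x‖ ^ 2 - g h)
        =O[𝓝 0] fun h : X => ‖h‖ ^ 2 := by
      refine Asymptotics.IsBigO.of_bound K (Eventually.of_forall fun h => ?_)
      rw [Real.norm_of_nonneg (low h), Real.norm_of_nonneg (by positivity)]
      exact up h
    refine hO.trans_isLittleO ?_
    have := Asymptotics.isLittleO_norm_pow_id (E' := X) (n := 2) (by norm_num)
    exact this
  have hj : dualityMap 2 x = g := by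
    unfold dualityMap
    rw [aux_fun_eq]
    exact hd.fderiv
  rw [aux_breg, hj]
  have h1 := low (y - x)
  have h2 := up (y - x)
  rw [add_sub_cancel] at h1 h2
  exact ⟨h1, h2⟩

theorem aux_mid {k : ℝ} (hk : ∀ x y : X, 1 / 2 * ‖(1 / 2 : ℝ) • (x + y)‖ ^ 2 ≤
      (1 / 2 * ‖x‖ ^ 2 + 1 / 2 * ‖y‖ ^ 2) / 2 - k * ‖x - y‖ ^ 2) (y z x : X) :
    bregmanDist 2 ((1 / 2 : ℝ) • (y + z)) x ≤
      (bregmanDist 2 y x + bregmanDist 2 z x) / 2 - k * ‖y - z‖ ^ 2 := by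
  have := hk y z
  simp only [aux_breg]
  have e : dualityMap 2 x ((1 / 2 : ℝ) • (y + z) - x)
      = (dualityMap 2 x (y - x) + dualityMap 2 x (z - x)) / 2 := by
    simp only [map_sub, map_smul, map_add, smul_eq_mul]; ring
  rw [e]
  linarith

theorem aux_self (x : X) : bregmanDist 2 x x = 0 := by
  rw [aux_breg]; simp

theorem aux_lower {k : ℝ} (hk : ∀ x y : X, 1 / 2 * ‖(1 / 2 : ℝ) • (x + y)‖ ^ 2 ≤
      (1 / 2 * ‖x‖ ^ 2 + 1 / 2 * ‖y‖ ^ 2) / 2 - k * ‖x - y‖ ^ 2)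
    (hpos : ∀ y x : X, 0 ≤ bregmanDist 2 y x) (y x : X) :
    2 * k * ‖y - x‖ ^ 2 ≤ bregmanDist 2 y x := by
  have h1 := aux_mid hk y x x
  have h2 := hpos ((1 / 2 : ℝ) • (y + x)) x
  rw [aux_self] at h1
  linarith

theorem aux_cont (x : X) : Continuous fun y : X => bregmanDist 2 y x := by
  simp only [aux_breg]
  fun_prop

/-- Existence of the Bregman projection. -/
theorem aux_exists [CompleteSpace X] {k : ℝ} (k0 : 0 < k)
    (hk : ∀ x y : X, 1 / 2 * ‖(1 / 2 : ℝ) • (x + y)‖ ^ 2 ≤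
      (1 / 2 * ‖x‖ ^ 2 + 1 / 2 * ‖y‖ ^ 2) / 2 - k * ‖x - y‖ ^ 2)
    (hpos : ∀ y x : X, 0 ≤ bregmanDist 2 y x) (S : Submodule ℝ X) (hS : IsClosed (S : Set X))
    (x : X) : ∃ y, y ∈ (S : Set X) ∧ ∀ m ∈ (S : Set X), bregmanDist 2 y x ≤ bregmanDist 2 m x := by
  set I := sInf ((fun m : X => bregmanDist 2 m x) '' (S : Set X)) with hI
  have hbdd : BddBelow ((fun m : X => bregmanDist 2 m x) '' (S : Set X)) := by
    refine ⟨0, ?_⟩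
    rintro _ ⟨m, -, rfl⟩
    exact hpos m x
  have hne : ((fun m : X => bregmanDist 2 m x) '' (S : Set X)).Nonempty := ⟨_, 0, S.zero_mem, rfl⟩
  have hIle : ∀ m ∈ S, I ≤ bregmanDist 2 m x := fun m hm => csInf_le hbdd ⟨m, hm, rfl⟩
  have hseq : ∀ n : ℕ, ∃ m ∈ S, bregmanDist 2 m x < I + 1 / ((n:ℝ) + 1) := by
    intro n
    obtain ⟨_, ⟨m, hm, rfl⟩, hlt⟩ := exists_lt_of_csInf_lt hne
      (show sInf _ < I + 1 / ((n:ℝ) + 1) by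
        rw [← hI]; exact lt_add_of_pos_right _ (by positivity))
    exact ⟨m, hm, hlt⟩
  choose m hm hlt using hseq
  have hcau : CauchySeq m := by
    refine cauchySeq_of_le_tendsto_0 (fun n : ℕ => Real.sqrt (1 / ((n:ℝ) + 1) / k)) ?_ ?_
    · intro n l N hn hl
      rw [dist_eq_norm]
      apply Real.le_sqrt_of_sq_le
      rw [le_div_iff₀ k0]
      have h1 := aux_mid hk (m n) (m l) x
      have h2 := hIle _ (S.smul_mem (1 / 2 : ℝ) (S.add_mem (hm n) (hm l)))
      have h3 : 1 / ((n:ℝ) + 1) ≤ 1 / ((N:ℝ) + 1) := by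
        apply one_div_le_one_div_of_le (by positivity)
        have : (N:ℝ) ≤ n := by exact_mod_cast hn
        linarith
      have h4 : 1 / ((l:ℝ) + 1) ≤ 1 / ((N:ℝ) + 1) := by
        apply one_div_le_one_div_of_le (by positivity)
        have : (N:ℝ) ≤ l := by exact_mod_cast hl
        linarith
      linarith [hlt n, hlt l]
    · have h1 := (tendsto_one_div_add_atTop_nhds_zero_nat (𝕜 := ℝ)).div_const k
      have h2 := (Real.continuous_sqrt.tendsto _).comp h1
      simpa [Function.comp_def] using h2
  obtain ⟨y, hy⟩ := cauchySeq_tendsto_of_complete hcau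
  have hyS : y ∈ (S : Set X) := hS.mem_of_tendsto hy (Eventually.of_forall hm)
  refine ⟨y, hyS, fun z hz => le_trans ?_ (hIle z hz)⟩
  have h1 := ((aux_cont x).tendsto y).comp hy
  have h2 : Tendsto (fun n : ℕ => I + 1 / ((n:ℝ) + 1)) atTop (𝓝 (I + 0)) :=
    (tendsto_one_div_add_atTop_nhds_zero_nat (𝕜 := ℝ)).const_add I
  rw [add_zero] at h2
  exact le_of_tendsto_of_tendsto' h1 h2 fun n => (hlt n).le

/-- Orthogonality for minimizers. -/
theorem aux_orth {K : ℝ} (hup : ∀ y x : X, bregmanDist 2 y x ≤ K * ‖y - x‖ ^ 2)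
    (S : Submodule ℝ X) (x y : X) (hy : y ∈ S)
    (hmin : ∀ m ∈ (S : Set X), bregmanDist 2 y x ≤ bregmanDist 2 m x) (m : X) (hm : m ∈ S) :
    dualityMap 2 y m = dualityMap 2 x m := by
  set b := dualityMap 2 y m - dualityMap 2 x m with hb
  have key : ∀ t : ℝ, 0 ≤ t * b + K * ‖m‖ ^ 2 * t ^ 2 := by
    intro t
    have h1 := hmin (y + t • m) (S.add_mem hy (S.smul_mem t hm))
    have h2 := hup (y + t • m) y
    rw [aux_breg, aux_breg] at h1
    rw [aux_breg] at h2
    simp only [map_sub, map_add, map_smul, smul_eq_mul, add_sub_cancel_left, norm_smul] at h1 h2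
    rw [mul_pow, Real.norm_eq_abs, sq_abs] at h2
    rw [hb]
    linarith
  have hb0 : b = 0 := by
    by_contra hne
    have hbb : 0 < b ^ 2 := by positivity
    set A := K * ‖m‖ ^ 2
    have h1 := key (-(b / (|A| + 1)))
    have hA : 0 < |A| + 1 := by positivity
    have e : -(b / (|A| + 1)) * b + A * (-(b / (|A| + 1))) ^ 2
        = (b ^ 2 / (|A| + 1) ^ 2) * (A - (|A| + 1)) := by
      field_simp
      ring
    rw [e] at h1
    have h2 : A - (|A| + 1) < 0 := by linarith [le_abs_self A]
    have h3 : 0 < b ^ 2 / (|A| + 1) ^ 2 := by positivity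
    nlinarith
  linarith

theorem aux_pyth (m y x : X) (h : dualityMap 2 y (m - y) = dualityMap 2 x (m - y)) :
    bregmanDist 2 m x = bregmanDist 2 m y + bregmanDist 2 y x := by
  simp only [aux_breg]
  simp only [map_sub] at h ⊢
  linarith

/-- Bounded decompositions in a closed sum. -/
theorem aux_decomp [CompleteSpace X] (M N : Submodule ℝ X) (hM : IsClosed (M : Set X))
    (hN : IsClosed (N : Set X)) (hMN : IsClosed ((M ⊔ N : Submodule ℝ X) : Set X)) :
    ∃ κ > (0:ℝ), ∀ z ∈ M ⊔ N, ∃ m ∈ M, ∃ n ∈ N, m + n = z ∧ ‖m‖ ≤ κ * ‖z‖ ∧ ‖n‖ ≤ κ * ‖z‖ := by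
  haveI : CompleteSpace M := hM.completeSpace_coe
  haveI : CompleteSpace N := hN.completeSpace_coe
  haveI : CompleteSpace (M ⊔ N : Submodule ℝ X) := hMN.completeSpace_coe
  let T : (M × N) →L[ℝ] (M ⊔ N : Submodule ℝ X) :=
    (M.subtypeL.coprod N.subtypeL).codRestrict (M ⊔ N) (by
      rintro ⟨p, q⟩
      exact Submodule.add_mem_sup p.2 q.2)
  have hT : Function.Surjective T := by
    rintro ⟨z, hz⟩
    obtain ⟨p, hp, q, hq, rfl⟩ := Submodule.mem_sup.mp hz
    exact ⟨(⟨p, hp⟩, ⟨q, hq⟩), rfl⟩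
  obtain ⟨κ, hκ, h⟩ := T.exists_preimage_norm_le hT
  refine ⟨κ, hκ, fun z hz => ?_⟩
  obtain ⟨⟨p, q⟩, hpq, hn⟩ := h ⟨z, hz⟩
  refine ⟨p, p.2, q, q.2, congrArg Subtype.val hpq, ?_, ?_⟩
  · exact (norm_fst_le (p, q)).trans hn
  · exact (norm_snd_le (p, q)).trans hn

/-- One step estimate: `y ∈ N`, `z ∈ M`. -/
theorem aux_step {M N : Submodule ℝ X} {κ K k : ℝ} (hκ : 0 < κ) (hK : 0 < K) (hk : 0 < k)
    (hdec : ∀ z ∈ M ⊔ N, ∃ m ∈ M, ∃ n ∈ N, m + n = z ∧ ‖m‖ ≤ κ * ‖z‖ ∧ ‖n‖ ≤ κ * ‖z‖)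
    (hup : ∀ y x : X, bregmanDist 2 y x ≤ K * ‖y - x‖ ^ 2)
    (hlow : ∀ y x : X, 2 * k * ‖y - x‖ ^ 2 ≤ bregmanDist 2 y x)
    (p y z : X) (hy : y ∈ N) (hz : z ∈ M)
    (hp : ∀ w ∈ M ⊓ N, bregmanDist 2 p y ≤ bregmanDist 2 w y) :
    bregmanDist 2 p y ≤ (K * κ ^ 2 / (2 * k)) * bregmanDist 2 z y := by
  obtain ⟨m, hm, n, hn, e, h1, h2⟩ := hdec (z - y)
    (Submodule.sub_mem _ (Submodule.mem_sup_left hz) (Submodule.mem_sup_right hy))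
  have hw : y + n ∈ M ⊓ N := by
    refine ⟨?_, N.add_mem hy hn⟩
    have : y + n = z - m := by
      rw [eq_sub_iff_add_eq, add_assoc, add_comm n m, e]; abel
    rw [this]
    exact M.sub_mem hz hm
  have h3 := hp _ hw
  have h4 := hup (y + n) y
  rw [add_sub_cancel_left] at h4
  have h5 : ‖n‖ ^ 2 ≤ (κ * ‖z - y‖) ^ 2 := pow_le_pow_left₀ (norm_nonneg _) h2 2
  have h6 := hlow z y
  calc bregmanDist 2 p y ≤ K * ‖n‖ ^ 2 := h3.trans h4
    _ ≤ K * (κ * ‖z - y‖) ^ 2 := mul_le_mul_of_nonneg_left h5 hK.le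
    _ = (K * κ ^ 2 / (2 * k)) * (2 * k * ‖z - y‖ ^ 2) := by field_simp
    _ ≤ _ := mul_le_mul_of_nonneg_left h6 (by positivity)

theorem statement15 {X : Type*} [NormedAddCommGroup X] [NormedSpace ℝ X] [CompleteSpace X]
    (hconv : PowerConvex X 2) (hsmooth : PowerSmooth X 2)
    (M N : Submodule ℝ X) (hM : IsClosed (M : Set X)) (hN : IsClosed (N : Set X))
    (hMN : IsClosed ((M ⊔ N : Submodule ℝ X) : Set X))
    (a : X) (x : ℕ → X) (hx0 : x 0 = a)
    (hodd : ∀ n : ℕ, x (2 * n + 1) = bregmanProj 2 (M : Set X) (x (2 * n)))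
    (heven : ∀ n : ℕ, x (2 * n + 2) = bregmanProj 2 (N : Set X) (x (2 * n + 1))) :
    Filter.Tendsto x Filter.atTop
      (𝓝 (bregmanProj 2 ((M ⊓ N : Submodule ℝ X) : Set X) a)) ∧
    (∃ C > (0 : ℝ), ∃ q ∈ Set.Ioo (0 : ℝ) 1, ∀ n : ℕ,
      bregmanDist 2 (bregmanProj 2 ((M ⊓ N : Submodule ℝ X) : Set X) a) (x n) ≤ C * q ^ n) ∧
    (∃ C' > (0 : ℝ), ∃ q' ∈ Set.Ioo (0 : ℝ) 1, ∀ n : ℕ,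
      ‖bregmanProj 2 ((M ⊓ N : Submodule ℝ X) : Set X) a - x n‖ ≤ C' * q' ^ n) := by
  obtain ⟨K, K0, hK⟩ := aux_smooth hsmooth
  obtain ⟨k, k0, hk⟩ := aux_convex hconv
  have hpos : ∀ y x : X, 0 ≤ bregmanDist 2 y x := fun y x => (aux_upper hK y x).1
  have hup : ∀ y x : X, bregmanDist 2 y x ≤ K * ‖y - x‖ ^ 2 := fun y x => (aux_upper hK y x).2
  have hlow := aux_lower hk hpos
  have hproj : ∀ S : Submodule ℝ X, IsClosed (S : Set X) → ∀ y : X,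
      bregmanProj 2 (S : Set X) y ∈ S ∧ ∀ m ∈ S,
        dualityMap 2 (bregmanProj 2 (S : Set X) y) m = dualityMap 2 y m := by
    intro S hS y
    have h : bregmanProj 2 (S : Set X) y ∈ (S : Set X) ∧ ∀ m ∈ (S : Set X),
        bregmanDist 2 (bregmanProj 2 (S : Set X) y) y ≤ bregmanDist 2 m y :=
      Classical.epsilon_spec (aux_exists k0 hk hpos S hS y)
    exact ⟨h.1, aux_orth hup S y _ h.1 h.2⟩
  obtain ⟨κ, κ0, hdec⟩ := aux_decomp M N hM hN hMN
  have hdec' : ∀ z ∈ N ⊔ M, ∃ m ∈ N, ∃ n ∈ M, m + n = z ∧ ‖m‖ ≤ κ * ‖z‖ ∧ ‖n‖ ≤ κ * ‖z‖ := by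
    intro z hz
    rw [sup_comm] at hz
    obtain ⟨m, hm, n, hn, e, h1, h2⟩ := hdec z hz
    exact ⟨n, hn, m, hm, by rw [add_comm, e], h2, h1⟩
  have hI : IsClosed ((M ⊓ N : Submodule ℝ X) : Set X) := by
    rw [Submodule.coe_inf]; exact hM.inter hN
  obtain ⟨hpI, hpo⟩ := hproj (M ⊓ N) hI a
  generalize bregmanProj 2 ((M ⊓ N : Submodule ℝ X) : Set X) a = p at *
  have hstepM : ∀ n, x (2 * n + 1) ∈ M ∧ ∀ m ∈ M,
      dualityMap 2 (x (2 * n + 1)) m = dualityMap 2 (x (2 * n)) m := by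
    intro n; rw [hodd]; exact hproj M hM _
  have hstepN : ∀ n, x (2 * n + 2) ∈ N ∧ ∀ m ∈ N,
      dualityMap 2 (x (2 * n + 2)) m = dualityMap 2 (x (2 * n + 1)) m := by
    intro n; rw [heven]; exact hproj N hN _
  have hstep : ∀ n, ∀ m ∈ M ⊓ N, dualityMap 2 (x (n + 1)) m = dualityMap 2 (x n) m := by
    intro n m hm
    rcases Nat.even_or_odd' n with ⟨l, rfl | rfl⟩
    · exact (hstepM l).2 m hm.1
    · exact (hstepN l).2 m hm.2
  have hall : ∀ n, ∀ m ∈ M ⊓ N, dualityMap 2 p m = dualityMap 2 (x n) m := by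
    intro n
    induction n with
    | zero => intro m hm; rw [hx0]; exact hpo m hm
    | succ n ih => intro m hm; rw [hstep n m hm]; exact ih m hm
  have hbest : ∀ n, ∀ w ∈ M ⊓ N, bregmanDist 2 p (x n) ≤ bregmanDist 2 w (x n) := by
    intro n w hw
    rw [aux_pyth w p (x n) (hall n _ (Submodule.sub_mem _ hw hpI))]
    linarith [hpos w p]
  have hpyth : ∀ n, bregmanDist 2 p (x n)
      = bregmanDist 2 p (x (n + 1)) + bregmanDist 2 (x (n + 1)) (x n) := by
    intro n
    apply aux_pyth
    rcases Nat.even_or_odd' n with ⟨l, rfl | rfl⟩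
    · exact (hstepM l).2 _ (M.sub_mem hpI.1 (hstepM l).1)
    · exact (hstepN l).2 _ (N.sub_mem hpI.2 (hstepN l).1)
  set L0 := K * κ ^ 2 / (2 * k) with hL0
  have hkey : ∀ n, bregmanDist 2 p (x (n + 1)) ≤
      L0 * bregmanDist 2 (x (n + 2)) (x (n + 1)) := by
    intro n
    rcases Nat.even_or_odd' n with ⟨l, rfl | rfl⟩
    · exact aux_step κ0 K0 k0 hdec' hup hlow p _ _ (hstepM l).1 (hstepN l).1
        (fun w hw => hbest _ w ⟨hw.2, hw.1⟩)
    · exact aux_step κ0 K0 k0 hdec hup hlow p _ _ (hstepN l).1 (hstepM (l + 1)).1 (hbest _)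
  have L00 : 0 < L0 := by positivity
  obtain ⟨q, hq⟩ : ∃ q, q = 1 - 1 / (L0 + 2) := ⟨_, rfl⟩
  have hq0 : 0 < q := by
    have : 1 / (L0 + 2) < 1 := by rw [div_lt_one (by positivity)]; linarith
    linarith
  have hq1 : q < 1 := by
    have : 0 < 1 / (L0 + 2) := by positivity
    linarith
  have hcontr : ∀ n, bregmanDist 2 p (x (n + 2)) ≤ q * bregmanDist 2 p (x (n + 1)) := by
    intro n
    have h1 := hkey n
    have h2 := hpyth (n + 1)
    have h3 := hpos (x (n + 2)) (x (n + 1))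
    have h4 : bregmanDist 2 p (x (n + 1)) / (L0 + 2) ≤ bregmanDist 2 (x (n + 2)) (x (n + 1)) := by
      rw [div_le_iff₀ (by positivity)]
      linarith
    have h5 : q * bregmanDist 2 p (x (n + 1))
        = bregmanDist 2 p (x (n + 1)) - bregmanDist 2 p (x (n + 1)) / (L0 + 2) := by
      rw [hq]; ring
    rw [h5]
    have h6 : bregmanDist 2 p (x (n + 1)) = bregmanDist 2 p (x (n + 2))
      + bregmanDist 2 (x (n + 2)) (x (n + 1)) := h2
    linarith
  obtain ⟨C, hC⟩ : ∃ C, C = (bregmanDist 2 p (x 0) + 1) / q := ⟨_, rfl⟩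
  have C0 : 0 < C := by
    have := hpos p (x 0)
    rw [hC]; positivity
  have hCq : C * q = bregmanDist 2 p (x 0) + 1 := by rw [hC]; field_simp
  have hrate1 : ∀ n, bregmanDist 2 p (x (n + 1)) ≤ C * q ^ (n + 1) := by
    intro n
    induction n with
    | zero =>
      have h1 := hpyth 0
      have h2 := hpos (x (0 + 1)) (x 0)
      rw [zero_add, pow_one, hCq]
      rw [zero_add] at h1 h2
      linarith
    | succ n ih =>
      calc bregmanDist 2 p (x (n + 2)) ≤ q * bregmanDist 2 p (x (n + 1)) := hcontr n
        _ ≤ q * (C * q ^ (n + 1)) := mul_le_mul_of_nonneg_left ih hq0.le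
        _ = C * q ^ (n + 1 + 1) := by ring
  have hrate : ∀ n, bregmanDist 2 p (x n) ≤ C * q ^ n := by
    intro n
    cases n with
    | zero =>
      rw [pow_zero, mul_one]
      have := mul_le_of_le_one_right C0.le hq1.le
      linarith
    | succ n => exact hrate1 n
  have hs0 : 0 < Real.sqrt q := Real.sqrt_pos.mpr hq0
  have hs1 : Real.sqrt q < 1 := by
    rw [Real.sqrt_lt' one_pos]; simpa using hq1
  have hnorm : ∀ n, ‖p - x n‖ ≤ Real.sqrt (C / (2 * k)) * Real.sqrt q ^ n := by
    intro n
    refine (sq_le_sq₀ (norm_nonneg _) (by positivity)).mp ?_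
    rw [mul_pow, Real.sq_sqrt (by positivity), ← pow_mul, mul_comm n 2, pow_mul,
      Real.sq_sqrt hq0.le, div_mul_eq_mul_div, le_div_iff₀ (by positivity)]
    linarith [hlow p (x n), hrate n]
  refine ⟨?_, ⟨C, C0, q, ⟨hq0, hq1⟩, hrate⟩,
    ⟨Real.sqrt (C / (2 * k)), Real.sqrt_pos.mpr (by positivity), Real.sqrt q, ⟨hs0, hs1⟩, hnorm⟩⟩
  rw [tendsto_iff_norm_sub_tendsto_zero]
  have hlim : Tendsto (fun n => Real.sqrt (C / (2 * k)) * Real.sqrt q ^ n) atTop (𝓝 0) := by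
    simpa using (tendsto_pow_atTop_nhds_zero_of_lt_one hs0.le hs1).const_mul
      (Real.sqrt (C / (2 * k)))
  refine squeeze_zero (fun n => norm_nonneg _) (fun n => ?_) hlim
  rw [norm_sub_rev]
  exact hnorm n
end
end
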